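/- arXiv:2507.21316 — 4 statements merged into one kernel-verified Lean document; each statement's English description precedes it below -/
import Mathlib

section
/- Let G be a finite group and p a prime not dividing |G|. Then the group ring ℤ_(p)G is semiperfect if and only if both of the following hold: (i) for every complex irreducible character χ of G, the Schur index of χ (over ℚ) equals 1; and (ii) for every complex irreducible character χ of G, the prime p is inert in the field of character values ℚ(χ), i.e. p remains a prime element in the ring of integers of ℚ(χ) (equivalently, 𝒪_{ℚ(χ)}/(p) is a field). -/
set_option linter.unusedSectionVars false

/-- The Jacobson radical of a (possibly noncommutative) ring, as a two-sided ideal: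
the intersection of all maximal left ideals. -/
def ringJacobson (R : Type*) [Ring R] : TwoSidedIdeal R :=
  TwoSidedIdeal.jacobson ⊥

/-- A ring `R` is *semiperfect* if `R / J(R)` is a semisimple (artinian) ring and every
idempotent of `R / J(R)` can be lifted to an idempotent of `R`. -/
def IsSemiperfectRing (R : Type*) [Ring R] : Prop :=
  IsSemisimpleRing (ringJacobson R).ringCon.Quotient ∧
  ∀ x : (ringJacobson R).ringCon.Quotient, IsIdempotentElem x →
    ∃ e : R, IsIdempotentElem e ∧ (ringJacobson R).ringCon.mk' e = x

instance int_span_prime_isPrime (p : ℕ) [hp : Fact p.Prime] :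
    (Ideal.span {(p : ℤ)}).IsPrime :=
  (Ideal.span_singleton_prime (by exact_mod_cast hp.out.ne_zero)).mpr
    (Int.prime_iff_natAbs_prime.mpr (by simpa using hp.out))

/-- The localisation `ℤ_(p)` of the integers at the prime `p`. -/
abbrev ZLoc (p : ℕ) [Fact p.Prime] : Type :=
  Localization.AtPrime (Ideal.span {(p : ℤ)})

open scoped Classical in
/-- The field of character values `ℚ(χ) ⊆ ℂ` of a class function `χ : G → ℂ`. -/
noncomputable def charField {G : Type} [Group G] (χ : G → ℂ) : IntermediateField ℚ ℂ :=
  IntermediateField.adjoin ℚ (Set.range χ)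

set_option synthInstance.maxHeartbeats 1000000 in
/-- The Schur index (over `ℚ`) of a complex character `χ` of a finite group `G`: the least
`m ≥ 1` such that `m • χ` is afforded by a representation of `G` over the field of character
values `ℚ(χ)`. -/
noncomputable def schurIndex {G : Type} [Group G] (χ : G → ℂ) : ℕ :=
  sInf {m : ℕ | 0 < m ∧
    ∃ (n : ℕ) (ρ : Representation (charField χ) G (Fin n → charField χ)),
      ∀ g : G, algebraMap (charField χ) ℂ
          (LinearMap.trace (charField χ) (Fin n → charField χ) (ρ g)) = (m : ℂ) * χ g}


/-! ### Primitive idempotents -/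

/-- A primitive idempotent. -/
def PrimIdem {R : Type*} [Ring R] (e : R) : Prop :=
  e * e = e ∧ e ≠ 0 ∧ ∀ f : R, f * f = f → e * f = f → f * e = f → f = 0 ∨ f = e

theorem exists_primIdem {R : Type*} [Ring R] [IsNoetherianRing R] (P : R → Prop) (h0 : ¬ P 0)
    (hs : ∀ e f : R, e * e = e → f * f = f → e * f = f → f * e = f → P e → P f ∨ P (e - f))
    (e0 : R) (he0 : e0 * e0 = e0) (hP : P e0) :
    ∃ e, PrimIdem e ∧ P e ∧ e0 * e = e ∧ e * e0 = e := by
  have wf : WellFounded ((· > ·) : Ideal R → Ideal R → Prop) :=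
    (inferInstance : WellFoundedGT (Ideal R)).wf
  have key : ∀ I : Ideal R, ∀ e : R, I = Ideal.span {1 - e} → e * e = e → P e →
      ∃ e', PrimIdem e' ∧ P e' ∧ e * e' = e' ∧ e' * e = e' := by
    intro I
    induction I using wf.induction with
    | _ I ih =>
      intro e hI he hPe
      by_cases hprim : PrimIdem e
      · exact ⟨e, hprim, hPe, he, he⟩
      have hne : e ≠ 0 := fun h => h0 (h ▸ hPe)
      simp only [PrimIdem, not_and, not_forall, not_or] at hprim
      obtain ⟨f, hf, hef, hfe, hf0, hfe'⟩ := hprim he hne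
      have step : ∀ f : R, f * f = f → e * f = f → f * e = f → f ≠ e → P f →
          ∃ e', PrimIdem e' ∧ P e' ∧ e * e' = e' ∧ e' * e = e' := by
        intro f hf hef hfe hne hPf
        have hlt : Ideal.span {1 - f} > I := by
          rw [hI]
          refine lt_of_le_of_ne ?_ ?_
          · rw [Ideal.span_le, Set.singleton_subset_iff]
            refine Ideal.mem_span_singleton'.2 ⟨1 - e, ?_⟩
            rw [mul_sub, mul_one, sub_mul, hef]; simp
          · intro h
            have : (1 - f) ∈ Ideal.span {1 - e} := by
              rw [h]; exact Ideal.mem_span_singleton_self _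
            obtain ⟨a, ha⟩ := Ideal.mem_span_singleton'.1 this
            have h2 : (1 - f) * e = 0 := by
              rw [← ha, mul_assoc, sub_mul, he]; simp
            rw [sub_mul, hfe, one_mul, sub_eq_zero] at h2
            exact hne h2.symm
        obtain ⟨e', h1, h2, h3, h4⟩ := ih _ hlt f rfl hf hPf
        refine ⟨e', h1, h2, ?_, ?_⟩
        · rw [← h3, ← mul_assoc, hef]
        · rw [← h4, mul_assoc, hfe]
      rcases hs e f he hf hef hfe hPe with h | h
      · exact step f hf hef hfe hfe' h
      · refine step (e - f) ?_ ?_ ?_ ?_ h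
        · rw [sub_mul, mul_sub, mul_sub, he, hef, hfe, hf]; simp
        · rw [mul_sub, he, hef]
        · rw [sub_mul, he, hfe]
        · simpa using hf0
  exact key _ e0 rfl he0 hP

/-! ### Regular rings -/

theorem regular_of_semisimple {F : Type*} [Ring F] [IsSemisimpleRing F] (x : F) :
    ∃ y, x = x * y * x := by
  obtain ⟨N, hN⟩ := exists_isCompl (Ideal.span {x} : Ideal F)
  have h1 : (1 : F) ∈ Ideal.span {x} ⊔ N := by rw [hN.sup_eq_top]; trivial
  obtain ⟨a, ha, b, hb, hab⟩ := Submodule.mem_sup.1 h1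
  obtain ⟨y, rfl⟩ := Ideal.mem_span_singleton'.1 ha
  refine ⟨y, ?_⟩
  have h2 : x * b = x - x * y * x := by
    have : b = 1 - y * x := by rw [← hab]; simp
    rw [this, mul_sub, mul_one, mul_assoc]
  have h3 : x * b ∈ (Ideal.span {x} : Ideal F) := by
    rw [h2]
    exact sub_mem (Ideal.mem_span_singleton_self _) (Ideal.mul_mem_left _ _ (Ideal.mem_span_singleton_self _))
  have h4 : x * b ∈ N := Ideal.mul_mem_left _ _ hb
  have h5 := Submodule.disjoint_def.1 hN.disjoint _ h3 h4
  rw [h2, sub_eq_zero] at h5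
  exact h5

section lift
variable {R F : Type*} [Ring R] [Ring F] (π : R →+* F)

theorem lift_same (hπ : Function.Surjective π) (e : R) (he : e * e = e) (x : F)
    (h1 : x * π e = x) (h2 : π e * x = π e) : ∃ f : R, f * f = f ∧ π f = x := by
  obtain ⟨z, rfl⟩ := hπ x
  refine ⟨e + (1 - e) * z * e, ?_, ?_⟩
  · have h3 : e * (1 - e) = 0 := by rw [mul_sub, he]; simp
    have : (e + (1 - e) * z * e) * (e + (1 - e) * z * e)
      = e * e + e * (1 - e) * z * e + (1 - e) * z * (e * e)
        + (1 - e) * z * (e * (1 - e)) * z * e := by noncomm_ring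
    rw [this, h3, he]; simp
  · simp only [map_add, map_mul, map_sub, sub_mul, one_mul]
    rw [mul_assoc, h1, h2]; simp

/-- Idempotents lift as soon as primitive idempotents stay primitive. -/
theorem lift_of_prim [IsNoetherianRing R] [IsNoetherianRing F] (hπ : Function.Surjective π)
    (hreg : ∀ x : F, ∃ y, x = x * y * x)
    (hprim : ∀ e : R, PrimIdem e → ∀ b : F, b * b = b → π e * b = b → b * π e = b →
      b = 0 ∨ b = π e) (x : F) (hx : x * x = x) : ∃ f : R, f * f = f ∧ π f = x := by
  have hsimple : ∀ (e : R) (N : Ideal F) (z : F), PrimIdem e → π e ∉ N → z * π e ∈ N →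
      z * π e = 0 := by
    intro e N z he heN hz
    have hee : π e * π e = π e := by rw [← map_mul, he.1]
    obtain ⟨t, ht⟩ := hreg (z * π e)
    set y := z * π e with hy
    have hye : y * π e = y := by rw [hy, mul_assoc, hee]
    rcases hprim e he (π e * t * y) (by
        calc π e * t * y * (π e * t * y) = π e * t * ((y * π e) * t * y) := by noncomm_ring
          _ = π e * t * y := by rw [hye, ← ht]) (by
        rw [mul_assoc (π e) t y, ← mul_assoc, hee]) (by rw [mul_assoc, hye]) with h | h
    · calc y = (y * π e) * t * y := by rw [hye]; exact ht
        _ = y * (π e * t * y) := by noncomm_ring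
        _ = 0 := by rw [h, mul_zero]
    · exfalso; apply heN; rw [← h]; exact Ideal.mul_mem_left _ _ hz
  have hcompl : ∀ N : Ideal F, ∃ ε : R, ε * ε = ε ∧ IsCompl (Ideal.span {π ε}) N := by
    intro N
    have wf : WellFounded ((· > ·) : Ideal F → Ideal F → Prop) :=
      (inferInstance : WellFoundedGT (Ideal F)).wf
    obtain ⟨I, ⟨ε, hε, hI, hd⟩, hmax⟩ := wf.has_min
      {I : Ideal F | ∃ ε : R, ε * ε = ε ∧ I = Ideal.span {π ε} ∧ Disjoint I N}
      ⟨⊥, 0, by simp, by simp, disjoint_bot_left⟩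
    refine ⟨ε, hε, hI ▸ hd, ?_⟩
    rw [← hI]
    by_contra hcon
    rw [codisjoint_iff] at hcon
    have hεI : π ε ∈ I := by rw [hI]; exact Ideal.mem_span_singleton_self _
    obtain ⟨e, hep, hPe, he1, he2⟩ := exists_primIdem (fun e => π e ∉ I ⊔ N) (by simp)
      (by
        intro e f _ _ _ _ h
        by_contra hc
        push Not at hc
        apply h
        have : π e = π f + π (e - f) := by simp
        rw [this]; exact add_mem hc.1 hc.2) (1 - ε) (by rw [mul_sub, sub_mul, sub_mul, hε]; simp)
      (by
        intro h
        apply hcon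
        rw [Ideal.eq_top_iff_one]
        have : (1 : F) = π ε + π (1 - ε) := by simp
        rw [this]
        exact add_mem (Submodule.mem_sup_left hεI) h)
    have hεe : ε * e = 0 := by
      rw [sub_mul, one_mul, sub_eq_self] at he1; exact he1
    have heε : e * ε = 0 := by
      rw [mul_sub, mul_one, sub_eq_self] at he2; exact he2
    refine hmax (Ideal.span {π (ε + e)}) ⟨ε + e, ?_, rfl, ?_⟩ ?_
    · rw [add_mul, mul_add, mul_add, hε, hεe, heε, hep.1]; simp
    · rw [Submodule.disjoint_def]
      intro w hw hwN
      obtain ⟨z, rfl⟩ := Ideal.mem_span_singleton'.1 hw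
      have hzε : z * π ε ∈ I := Ideal.mul_mem_left _ _ hεI
      have h1 : z * π e = 0 := by
        refine hsimple e (I ⊔ N) z hep hPe ?_
        have : z * π e = z * π (ε + e) - z * π ε := by rw [map_add, mul_add]; simp
        rw [this]
        exact sub_mem (Submodule.mem_sup_right hwN) (Submodule.mem_sup_left hzε)
      have h2 : z * π (ε + e) = z * π ε := by rw [map_add, mul_add, h1, add_zero]
      rw [h2] at hwN ⊢
      exact Submodule.disjoint_def.1 hd _ hzε hwN
    · have hle : I ≤ Ideal.span {π (ε + e)} := by
        rw [hI, Ideal.span_le, Set.singleton_subset_iff]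
        refine Ideal.mem_span_singleton'.2 ⟨π ε, ?_⟩
        rw [← map_mul, mul_add, hε, hεe, add_zero]
      refine lt_of_le_of_ne hle ?_
      intro h
      apply hPe
      refine Submodule.mem_sup_left ?_
      rw [h]
      refine Ideal.mem_span_singleton'.2 ⟨π e, ?_⟩
      rw [← map_mul, mul_add, hep.1, heε, zero_add]
  obtain ⟨ε, hε, hc⟩ := hcompl (Ideal.span {x})
  have h1 : (1 : F) ∈ Ideal.span {π ε} ⊔ Ideal.span {x} := by rw [hc.sup_eq_top]; trivial
  obtain ⟨a', ha, b', hb, hab⟩ := Submodule.mem_sup.1 h1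
  obtain ⟨a, rfl⟩ := Ideal.mem_span_singleton'.1 ha
  obtain ⟨b, rfl⟩ := Ideal.mem_span_singleton'.1 hb
  have hdis := Submodule.disjoint_def.1 hc.disjoint
  have hεε : π ε * π ε = π ε := by rw [← map_mul, hε]
  have e1 : π ε * (a * π ε) = π ε := by
    have h2 : π ε - π ε * (a * π ε) = π ε * b * x := by
      have h3 : π ε * (a * π ε + b * x) = π ε := by rw [hab, mul_one]
      rw [mul_add] at h3
      rw [sub_eq_iff_eq_add, mul_assoc, add_comm]; exact h3.symm
    have := hdis (π ε - π ε * (a * π ε))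
      (sub_mem (Ideal.mem_span_singleton_self _) (by
        rw [← mul_assoc]; exact Ideal.mul_mem_left _ _ (Ideal.mem_span_singleton_self _)))
      (by rw [h2]; exact Ideal.mul_mem_left _ _ (Ideal.mem_span_singleton_self _))
    rw [sub_eq_zero] at this; exact this.symm
  have e2 : x * (a * π ε) = 0 := by
    apply hdis
    · rw [← mul_assoc]; exact Ideal.mul_mem_left _ _ (Ideal.mem_span_singleton_self _)
    · have : x * (a * π ε) = x - x * b * x := by
        have h3 : x * (a * π ε + b * x) = x := by rw [hab, mul_one]
        rw [mul_add] at h3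
        rw [eq_sub_iff_add_eq, mul_assoc x b x]; exact h3
      rw [this]
      exact sub_mem (Ideal.mem_span_singleton_self _) (Ideal.mul_mem_left _ _ (Ideal.mem_span_singleton_self _))
  obtain ⟨E, hE, hEπ⟩ := lift_same π hπ ε hε (a * π ε) (by rw [mul_assoc, hεε]) e1
  have hbx : b * x = 1 - a * π ε := by rw [← hab]; simp
  refine lift_same π hπ (1 - E) (by rw [mul_sub, sub_mul, sub_mul, hE]; simp) x ?_ ?_
  · rw [map_sub, map_one, hEπ, mul_sub, e2]; simp
  · rw [map_sub, map_one, hEπ, ← hbx, mul_assoc, hx]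

/-- If idempotents lift, primitive idempotents stay primitive. -/
theorem prim_of_lift (hU : ∀ u : R, π u = 1 → IsUnit u)
    (hl : ∀ x : F, x * x = x → ∃ f : R, f * f = f ∧ π f = x)
    (e : R) (he : PrimIdem e) (b : F) (hb : b * b = b) (hb1 : π e * b = b) (hb2 : b * π e = b) :
    b = 0 ∨ b = π e := by
  obtain ⟨f, hf, rfl⟩ := hl b hb
  obtain ⟨u, hu⟩ := hU (1 - f + f * e * f) (by
    rw [map_add, map_sub, map_one, map_mul, map_mul, hb2, hb]; simp)
  have hfu : f * (u : R) = f * e * f := by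
    rw [hu, mul_add, mul_sub, hf, mul_one, sub_self, zero_add, ← mul_assoc, ← mul_assoc, hf]
  have huf : (u : R) * f = f * e * f := by
    rw [hu, add_mul, sub_mul, hf, one_mul, sub_self, zero_add, mul_assoc, hf]
  have hcomm : f * ((u⁻¹ : Rˣ) : R) = ((u⁻¹ : Rˣ) : R) * f := by
    rw [Units.eq_inv_mul_iff_mul_eq, ← mul_assoc, huf, ← hfu, mul_assoc, Units.mul_inv, mul_one]
  set w := f * ((u⁻¹ : Rˣ) : R) with hw
  have hfw : f * w = w := by rw [hw, ← mul_assoc, hf]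
  have hwf : w * f = w := by rw [hcomm, mul_assoc, hf]
  have hwew : w * e * w = w := by
    calc w * e * w = (w * f) * e * (f * w) := by rw [hwf, hfw]
      _ = w * (f * e * f) * w := by noncomm_ring
      _ = (f * (((u⁻¹ : Rˣ) : R) * u)) * f * w := by rw [← huf, hw]; noncomm_ring
      _ = w := by rw [Units.inv_mul, mul_one, hf, hfw]
  have hπu : π u = 1 := by
    rw [hu, map_add, map_sub, map_one, map_mul, map_mul, hb2, hb]; simp
  have hπu' : π ((u⁻¹ : Rˣ) : R) = 1 := by
    have : π ((u⁻¹ : Rˣ) : R) * π u = 1 := by rw [← map_mul, Units.inv_mul, map_one]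
    rwa [hπu, mul_one] at this
  have hg : π (e * w * e) = π f := by
    rw [map_mul, map_mul, hw, map_mul, hπu', mul_one, hb1, hb2]
  rcases he.2.2 (e * w * e) (by
      calc e * w * e * (e * w * e) = e * w * (e * e) * w * e := by noncomm_ring
        _ = e * (w * e * w) * e := by rw [he.1]; noncomm_ring
        _ = e * w * e := by rw [hwew]) (by rw [← mul_assoc, ← mul_assoc, he.1])
      (by rw [mul_assoc, he.1]) with h | h
  · left; rw [← hg, h, map_zero]
  · right; rw [← hg, h]

end lift

/-! ### Reduction of the group ring -/
section base
variable {O : Type} [CommRing O] [IsDomain O] [IsPrincipalIdealRing O] [IsLocalRing O]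
  {G : Type} [Group G] [Fintype G]

instance finite_monoidAlgebra : Module.Finite O (MonoidAlgebra O G) :=
  Module.Finite.equiv (MonoidAlgebra.coeffLinearEquiv O : MonoidAlgebra O G ≃ₗ[O] (G →₀ O)).symm

instance noetherian_monoidAlgebra : IsNoetherianRing (MonoidAlgebra O G) :=
  IsNoetherianRing.of_finite O _

variable (O G) in
/-- reduction mod the maximal ideal -/
noncomputable abbrev redHom :
    MonoidAlgebra O G →+* MonoidAlgebra (IsLocalRing.ResidueField O) G :=
  MonoidAlgebra.mapRingHom G (IsLocalRing.residue O)

theorem redHom_surj : Function.Surjective (redHom O G) := by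
  intro x
  induction x using MonoidAlgebra.induction with
  | zero => exact ⟨0, map_zero _⟩
  | single_add a b f _ _ ih =>
    obtain ⟨y, hy⟩ := ih
    obtain ⟨c, hc⟩ := IsLocalRing.residue_surjective b
    exact ⟨MonoidAlgebra.single a c + y, by simp [hy, hc]⟩

theorem redHom_eq_zero {q : O} (hq : IsLocalRing.maximalIdeal O = Ideal.span {q})
    (x : MonoidAlgebra O G) : redHom O G x = 0 ↔ ∃ y, x = q • y := by
  constructor
  · intro h
    have h1 : ∀ g, ∃ c, x.coeff g = q * c := by
      intro g
      have h2 : (redHom O G x).coeff g = 0 := by rw [h]; rfl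
      rw [MonoidAlgebra.coeff_mapRingHom, IsLocalRing.residue_eq_zero_iff, hq,
        Ideal.mem_span_singleton] at h2
      exact h2
    choose c hc using h1
    refine ⟨MonoidAlgebra.ofCoeff (Finsupp.equivFunOnFinite.symm c), ?_⟩
    ext g
    simp [hc]
  · rintro ⟨y, rfl⟩
    ext g
    have : IsLocalRing.residue O q = 0 := by
      rw [IsLocalRing.residue_eq_zero_iff, hq]; exact Ideal.mem_span_singleton_self _
    simp [this]

theorem redHom_left_inv (u : MonoidAlgebra O G) (hu : redHom O G u = 1) : ∃ z, z * u = 1 := by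
  obtain ⟨q, hq⟩ := IsPrincipalIdealRing.principal (IsLocalRing.maximalIdeal O)
  have hq' : IsLocalRing.maximalIdeal O = Ideal.span {q} := hq
  obtain ⟨y, hy⟩ := (redHom_eq_zero hq' (u - 1)).1 (by rw [map_sub, hu, map_one, sub_self])
  have key : (⊤ : Submodule O (MonoidAlgebra O G)) ≤
      LinearMap.range (LinearMap.mulRight O u) := by
    refine Submodule.le_of_le_smul_of_le_jacobson_bot (I := IsLocalRing.maximalIdeal O)
      Module.Finite.fg_top (IsLocalRing.maximalIdeal_le_jacobson _) ?_
    intro z _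
    have : z = z * u + q • (- (z * y)) := by
      have h2 : u = 1 + q • y := by rw [← hy]; simp
      rw [h2, mul_add, mul_smul_comm]; simp
    rw [this]
    refine add_mem (Submodule.mem_sup_left ⟨z, rfl⟩) (Submodule.mem_sup_right ?_)
    exact Submodule.smul_mem_smul (by rw [hq']; exact Ideal.mem_span_singleton_self _) trivial
  obtain ⟨z, hz⟩ := key (x := 1) trivial
  exact ⟨z, hz⟩

theorem redHom_unit (u : MonoidAlgebra O G) (hu : redHom O G u = 1) : IsUnit u := by
  obtain ⟨z, hz⟩ := redHom_left_inv u hu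
  have hz1 : redHom O G z = 1 := by
    have := congrArg (redHom O G) hz
    rwa [map_mul, hu, mul_one, map_one] at this
  obtain ⟨w, hw⟩ := redHom_left_inv z hz1
  have : w = u := by
    calc w = w * (z * u) := by rw [hz, mul_one]
      _ = u := by rw [← mul_assoc, hw, one_mul]
  exact ⟨⟨u, z, this ▸ hw, hz⟩, rfl⟩

theorem redHom_regular (hcard : IsUnit (Nat.card G : O))
    (x : MonoidAlgebra (IsLocalRing.ResidueField O) G) : ∃ y, x = x * y * x := by
  have : NeZero (Nat.card G : IsLocalRing.ResidueField O) := by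
    refine ⟨?_⟩
    have := (hcard.map (IsLocalRing.residue O)).ne_zero
    simpa using this
  exact regular_of_semisimple x

/-- An idempotent in the kernel of the reduction vanishes. -/
theorem redHom_idem_zero (e : MonoidAlgebra O G) (he : e * e = e) (h : redHom O G e = 0) :
    e = 0 := by
  obtain ⟨u, hu⟩ := redHom_unit (1 - e) (by rw [map_sub, h, map_one, sub_zero])
  have : (u : MonoidAlgebra O G) * e = 0 := by rw [hu, sub_mul, he, one_mul, sub_self]
  simpa using this

theorem mem_ringJacobson_iff (hcard : IsUnit (Nat.card G : O)) (x : MonoidAlgebra O G) :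
    x ∈ ringJacobson (MonoidAlgebra O G) ↔ redHom O G x = 0 := by
  rw [ringJacobson]
  constructor
  · intro hx
    obtain ⟨y', hy⟩ := redHom_regular hcard (redHom O G x)
    obtain ⟨y, rfl⟩ := redHom_surj y'
    have hxy := TwoSidedIdeal.mul_mem_right _ _ (-y) hx
    obtain ⟨z, hz⟩ := TwoSidedIdeal.mem_jacobson_iff.1 hxy 1
    rw [TwoSidedIdeal.mem_bot, sub_eq_zero] at hz
    have h2 : z * (1 - x * y) = 1 := by refine Eq.trans ?_ hz; noncomm_ring
    have h3 : redHom O G ((1 - x * y) * x) = 0 := by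
      rw [sub_mul, one_mul, map_sub, map_mul, map_mul, ← hy, sub_self]
    have h4 : x = z * ((1 - x * y) * x) := by rw [← mul_assoc, h2, one_mul]
    rw [h4, map_mul, h3, mul_zero]
  · intro hx
    rw [TwoSidedIdeal.mem_jacobson_iff]
    intro y
    obtain ⟨z, hz⟩ := redHom_left_inv (y * x + 1) (by
      rw [map_add, map_mul, hx, mul_zero, zero_add, map_one])
    refine ⟨z, ?_⟩
    rw [TwoSidedIdeal.mem_bot, sub_eq_zero, ← hz]; noncomm_ring

theorem isSemiperfect_iff (hcard : IsUnit (Nat.card G : O)) :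
    IsSemiperfectRing (MonoidAlgebra O G) ↔
      ∀ x : MonoidAlgebra (IsLocalRing.ResidueField O) G, x * x = x →
        ∃ f : MonoidAlgebra O G, f * f = f ∧ redHom O G f = x := by
  have : NeZero (Nat.card G : IsLocalRing.ResidueField O) := by
    refine ⟨?_⟩
    have := (hcard.map (IsLocalRing.residue O)).ne_zero
    simpa using this
  set J := ringJacobson (MonoidAlgebra O G) with hJ
  have hmk : ∀ x y, J.ringCon.mk' x = J.ringCon.mk' y ↔ redHom O G x = redHom O G y := by
    intro x y
    rw [← sub_eq_zero (a := redHom O G x), ← map_sub, ← mem_ringJacobson_iff hcard,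
      ← hJ, ← TwoSidedIdeal.rel_iff]
    exact RingCon.eq _
  have hsurj : Function.Surjective J.ringCon.mk' := RingCon.mk'_surjective _
  obtain ⟨s, hs⟩ := (redHom_surj (O := O) (G := G)).hasRightInverse
  let θ : MonoidAlgebra (IsLocalRing.ResidueField O) G →+* J.ringCon.Quotient :=
    (redHom O G).liftOfRightInverse s hs ⟨J.ringCon.mk', by
      intro x hx
      have := (hmk x 0).2 (by rw [map_zero]; exact hx)
      rwa [map_zero] at this⟩
  have hθ : ∀ x, θ (redHom O G x) = J.ringCon.mk' x := fun x =>
    RingHom.liftOfRightInverse_comp_apply _ _ _ _ _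
  have hθs : Function.Surjective θ := by
    intro y
    obtain ⟨x, rfl⟩ := hsurj y
    exact ⟨redHom O G x, hθ x⟩
  have hss : IsSemisimpleRing J.ringCon.Quotient := θ.isSemisimpleRing_of_surjective hθs
  constructor
  · rintro ⟨-, h⟩ x hx
    obtain ⟨y, rfl⟩ := redHom_surj x
    obtain ⟨e, he, he2⟩ := h (J.ringCon.mk' y) (by
      change _ * _ = _
      rw [← map_mul]; rw [hmk, map_mul, hx])
    exact ⟨e, he, (hmk _ _).1 he2⟩
  · intro h
    refine ⟨hss, ?_⟩
    intro x hx
    obtain ⟨y, rfl⟩ := hsurj x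
    obtain ⟨f, hf, hf2⟩ := h (redHom O G y) (by
      rw [← map_mul, ← hmk, map_mul]; exact hx)
    exact ⟨f, hf, (hmk _ _).2 hf2⟩

/-- The key lattice argument. -/
theorem prim_inj (hcard : IsUnit (Nat.card G : O)) {e : MonoidAlgebra O G} (he : PrimIdem e)
    {M : Type} [AddCommGroup M] [Module O M] [Module (MonoidAlgebra O G) M]
    [IsScalarTower O (MonoidAlgebra O G) M] [Module.IsTorsionFree O M]
    (v : M) (hv : v ≠ 0) (hev : e • v = v) (r : MonoidAlgebra O G) (hr : r * e = r)
    (hrv : r • v = 0) : r = 0 := by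
  let N : Submodule (MonoidAlgebra O G) M := Submodule.span _ {v}
  have : Module.Finite (MonoidAlgebra O G) N := Module.Finite.span_singleton _ _
  have : Module.Finite O N := Module.Finite.trans (MonoidAlgebra O G) N
  have : Module.Free O N := inferInstance
  let v' : N := ⟨v, Submodule.mem_span_singleton_self v⟩
  let φ : MonoidAlgebra O G →ₗ[MonoidAlgebra O G] N := LinearMap.toSpanSingleton _ _ v'
  have hφ : Function.Surjective φ := by
    rintro ⟨m, hm⟩
    obtain ⟨a, rfl⟩ := Submodule.mem_span_singleton.1 hm
    exact ⟨a, rfl⟩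
  obtain ⟨s0, hs0⟩ := Module.projective_lifting_property (φ.restrictScalars O)
    (LinearMap.id : N →ₗ[O] N) hφ
  have hs0' : ∀ n, φ (s0 n) = n := fun n => LinearMap.congr_fun hs0 n
  let s := s0.equivariantProjection G
  have hs : ∀ n, φ (s n) = n := by
    intro n
    have h1 : ∀ g : G, φ (s0.conjugate g n) = n := by
      intro g
      rw [LinearMap.conjugate_apply, map_smul, hs0', smul_smul, MonoidAlgebra.single_mul_single,
        inv_mul_cancel, mul_one, ← MonoidAlgebra.one_def, one_smul]
    have : s n = Ring.inverse (Nat.card G : O) • ∑ g : G, s0.conjugate g n :=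
      LinearMap.equivariantProjection_apply _ _ _
    rw [this, LinearMap.map_smul_of_tower, map_sum]
    simp only [h1]
    rw [Finset.sum_const, Finset.card_univ, ← Nat.cast_smul_eq_nsmul O, smul_smul,
      Fintype.card_eq_nat_card, Ring.inverse_mul_cancel _ hcard, one_smul]
  have hev' : e • v' = v' := Subtype.ext hev
  have hrv' : r • v' = 0 := Subtype.ext hrv
  set t := s v' with ht
  have htv : t • v' = v' := hs v'
  have het : e * t = t := by
    have := s.map_smul e v'
    rw [hev'] at this; exact this.symm
  have htt : t * t = t := by
    have := s.map_smul t v'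
    rw [htv] at this; exact this.symm
  have hrt : r * t = 0 := by
    have := s.map_smul r v'
    rw [hrv', map_zero] at this; exact this.symm
  have hte : t * e = e := by
    rcases he.2.2 (t * e) (by rw [mul_assoc, ← mul_assoc e, het, ← mul_assoc, htt])
      (by rw [← mul_assoc, het]) (by rw [mul_assoc, he.1]) with h | h
    · exfalso
      apply hv
      have h3 : (t * e) • v' = v' := by rw [mul_smul, hev', htv]
      rw [h, zero_smul] at h3
      exact (congrArg Subtype.val h3).symm
    · exact h
  rw [← hr, ← hte, ← mul_assoc, hrt, zero_mul]

end base

/-! ### Actions of group rings through a change of scalars -/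
section act
variable {k : Type} [CommRing k] {K : Type} [Field K] {G : Type} [Group G]
  {W : Type} [AddCommGroup W] [Module K W]

/-- action of `k[G]` on a `K`-representation -/
noncomputable def actE (c : k →+* K) (ρ : Representation K G W) :
    MonoidAlgebra k G →+* Module.End K W :=
  (MonoidAlgebra.lift K (Module.End K W) G ρ).toRingHom.comp (MonoidAlgebra.mapRingHom G c)

theorem actE_single (c : k →+* K) (ρ : Representation K G W) (g : G) (a : k) :
    actE c ρ (MonoidAlgebra.single g a) = c a • ρ g := by
  simp [actE]

theorem actE_smul (c : k →+* K) (ρ : Representation K G W) (a : k) (x : MonoidAlgebra k G) :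
    actE c ρ (a • x) = c a • actE c ρ x := by
  have : a • x = MonoidAlgebra.single 1 a * x := by
    rw [Algebra.smul_def, MonoidAlgebra.coe_algebraMap]; simp
  rw [this, map_mul, actE_single, map_one, smul_mul_assoc, one_mul]

theorem actE_algebraMap (c : k →+* K) (ρ : Representation K G W) (a : k) :
    actE c ρ (algebraMap k _ a) = c a • 1 := by
  rw [Algebra.algebraMap_eq_smul_one, actE_smul, map_one]

theorem actE_map {k' : Type} [CommRing k'] (c : k →+* K) (j : k' →+* k)
    (ρ : Representation K G W) (x : MonoidAlgebra k' G) :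
    actE c ρ (MonoidAlgebra.mapRingHom G j x) = actE (c.comp j) ρ x := by
  induction x using MonoidAlgebra.induction with
  | zero => simp
  | single_add a b f _ _ ih => rw [map_add, map_add, map_add, ih,
      MonoidAlgebra.mapRingHom_single, actE_single, actE_single]; rfl

theorem actE_eval (c : k →+* K) (ρ : Representation K G W) (x : MonoidAlgebra k G) (t : K) (v : W)
    (h : actE c ρ x v = t • v) (P : Polynomial k) :
    actE c ρ (Polynomial.aeval x P) v = P.eval₂ c t • v := by
  have hpow : ∀ n : ℕ, actE c ρ (x ^ n) v = t ^ n • v := by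
    intro n
    induction n with
    | zero => simp
    | succ n ih => rw [pow_succ, map_mul, Module.End.mul_apply, h, map_smul, ih, smul_smul,
        pow_succ, mul_comm]
  induction P using Polynomial.induction_on' with
  | add p q hp hq => simp only [map_add, LinearMap.add_apply, hp, hq, Polynomial.eval₂_add, add_smul]
  | monomial n a =>
    rw [Polynomial.aeval_monomial, map_mul, actE_algebraMap, Polynomial.eval₂_monomial]
    rw [Module.End.mul_apply, hpow]
    simp [smul_smul, mul_comm]

theorem dense [Finite G] [CharZero K] [FiniteDimensional K W] (ρ : Representation K G W)
    (h : ∀ φ : W →+ W, (∀ g w, φ (ρ g w) = ρ g (φ w)) → ∃ c : K, ∀ w, φ w = c • w)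
    (f : Module.End K W) : ∃ x : MonoidAlgebra ℚ G, actE (Rat.castHom K) ρ x = f := by
  letI : Module (MonoidAlgebra ℚ G) W := Module.compHom W (actE (Rat.castHom K) ρ)
  have hsm : ∀ (x : MonoidAlgebra ℚ G) (w : W), x • w = actE (Rat.castHom K) ρ x w :=
    fun _ _ => rfl
  have : NeZero (Nat.card G : ℚ) := ⟨by exact_mod_cast Nat.card_pos.ne'⟩
  have hss : IsSemisimpleModule (MonoidAlgebra ℚ G) W := inferInstance
  let f' : Module.End (Module.End (MonoidAlgebra ℚ G) W) W :=
    { toFun := f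
      map_add' := f.map_add
      map_smul' := by
        intro φ w
        obtain ⟨c, hc⟩ := h φ.toAddMonoidHom (by
          intro g w
          have h1 := φ.map_smul (MonoidAlgebra.single g (1 : ℚ)) w
          simp only [hsm, actE_single, map_one, one_smul] at h1
          exact h1)
        have hc' : ∀ w, φ w = c • w := hc
        simp only [Module.End.smul_def, RingHom.id_apply]
        rw [hc', hc', map_smul] }
  classical
  let b := Module.finBasis K W
  obtain ⟨r, hr⟩ := jacobson_density f' (Finset.univ.image b)
  refine ⟨r, b.ext fun i => ?_⟩
  exact (hr (b i) (Finset.mem_image_of_mem _ (Finset.mem_univ _))).symm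

end act

section act2
variable {O : Type} [CommRing O] [IsDomain O] [IsPrincipalIdealRing O] [IsLocalRing O]
  {G : Type} [Group G] [Fintype G] {K : Type} [Field K]
  {W : Type} [AddCommGroup W] [Module K W]

theorem prim_act (hcard : IsUnit (Nat.card G : O)) {e : MonoidAlgebra O G} (he : PrimIdem e)
    (c : O →+* K) (hc : Function.Injective c) (ρ : Representation K G W) (v : W) (hv : v ≠ 0)
    (hev : actE c ρ e v = v) (r : MonoidAlgebra O G) (hr : r * e = r) (hrv : actE c ρ r v = 0) :
    r = 0 := by
  letI : Module (MonoidAlgebra O G) W := Module.compHom W (actE c ρ)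
  letI : Module O W := Module.compHom W c
  have h1 : ∀ (x : MonoidAlgebra O G) (w : W), x • w = actE c ρ x w := fun _ _ => rfl
  have h2 : ∀ (x : O) (w : W), x • w = c x • w := fun _ _ => rfl
  haveI : IsScalarTower O (MonoidAlgebra O G) W := ⟨fun a x w => by
    rw [h1, h2, h1, actE_smul]; rfl⟩
  haveI : Module.IsTorsionFree O W := by
    refine ⟨fun r hr w w' h => ?_⟩
    have h' : c r • w = c r • w' := h
    exact smul_right_injective W (by
      rw [map_ne_zero_iff _ hc]; exact hr.ne_zero) h'
  exact prim_inj hcard he v hv hev r hr hrv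

theorem integral_act (c : O →+* K) (ρ : Representation K G W) (v : W) (hv : v ≠ 0)
    (x : MonoidAlgebra O G) (t : K) (h : actE c ρ x v = t • v) : c.IsIntegralElem t := by
  obtain ⟨P, hP, hP0⟩ := IsIntegral.of_finite O x
  refine ⟨P, hP, ?_⟩
  have := actE_eval c ρ x t v h P
  have h0 : Polynomial.aeval x P = 0 := hP0
  rw [h0, map_zero, LinearMap.zero_apply] at this
  exact (smul_eq_zero.1 this.symm).resolve_right hv

theorem redHom_aeval (x : MonoidAlgebra O G) (P : Polynomial O) :
    redHom O G (Polynomial.aeval x P) =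
      Polynomial.aeval (redHom O G x) (P.map (IsLocalRing.residue O)) := by
  induction P using Polynomial.induction_on' with
  | add p q hp hq => simp only [map_add, Polynomial.map_add, hp, hq]
  | monomial n a =>
    rw [Polynomial.aeval_monomial, map_mul, Polynomial.map_monomial, Polynomial.aeval_monomial,
      map_pow]
    congr 1
    simp [MonoidAlgebra.coe_algebraMap]

theorem scaled_root (hcard : IsUnit (Nat.card G : O)) {e : MonoidAlgebra O G} (he : PrimIdem e)
    (c : O →+* K) (hc : Function.Injective c) (ρ : Representation K G W) (v : W) (hv : v ≠ 0)
    (hev : actE c ρ e v = v) {q : O} (hq : IsLocalRing.maximalIdeal O = Ideal.span {q})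
    (x : MonoidAlgebra O G) (hex : e * x = x) (hxe : x * e = x) (a : K) (ha : c.IsIntegralElem a)
    (h : actE c ρ x v = (c q * a) • v) : ∃ d : ℕ, redHom O G (x ^ (d + 1)) = 0 := by
  obtain ⟨P, hP, hP0⟩ := ha
  have h1 := actE_eval c ρ x _ v h (P.scaleRoots q)
  rw [Polynomial.scaleRoots_eval₂_mul, hP0, mul_zero, zero_smul] at h1
  set y := Polynomial.aeval x (P.scaleRoots q) with hy
  have hcomm : e * y = y * e := by
    have : Commute e x := by rw [Commute, SemiconjBy, hex, hxe]
    rw [hy]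
    refine Polynomial.induction_on' (motive := fun Q => e * Polynomial.aeval x Q = Polynomial.aeval x Q * e) _ ?_ ?_
    · intro p q hp hq; rw [map_add, mul_add, add_mul, hp, hq]
    · intro n a
      rw [Polynomial.aeval_monomial, ← mul_assoc, ← Algebra.commutes, mul_assoc, mul_assoc,
        (this.pow_right n).eq]
  have h2 : y * e = 0 := by
    refine prim_act hcard he c hc ρ v hv hev (y * e) (by rw [mul_assoc, he.1]) ?_
    rw [map_mul, Module.End.mul_apply, hev, h1]
  have h3 := congrArg (redHom O G) h2
  have hq0 : IsLocalRing.residue O q = 0 := by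
    rw [IsLocalRing.residue_eq_zero_iff, hq]; exact Ideal.mem_span_singleton_self _
  rw [map_mul, hy, redHom_aeval, Polynomial.map_scaleRoots _ _ _ (by simp [hP.leadingCoeff]), hq0,
    Polynomial.scaleRoots_zero, Polynomial.Monic.leadingCoeff (hP.map _), one_smul] at h3
  refine ⟨(P.map (IsLocalRing.residue O)).natDegree, ?_⟩
  rw [map_pow, Polynomial.aeval_X] at h3
  have h4 : redHom O G x = redHom O G e * redHom O G x := by rw [← map_mul, hex]
  rw [map_pow, pow_succ]
  calc _ = redHom O G x ^ (P.map (IsLocalRing.residue O)).natDegree *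
        (redHom O G e * redHom O G x) := by rw [← h4]
    _ = 0 := by rw [← mul_assoc, h3, map_zero, zero_mul]
end act2

/-! ### Denominators and integrality -/
section denom

theorem clear_den {G : Type} [Group G] (O : Type) [CommRing O] (x : MonoidAlgebra ℚ G) :
    ∃ m : ℕ, m ≠ 0 ∧ ∃ y : MonoidAlgebra O G,
      ∀ (K : Type) [Field K] [CharZero K] (W : Type) [AddCommGroup W] [Module K W] (c : O →+* K)
        (ρ : Representation K G W),
        actE c ρ y = (m : K) • actE (Rat.castHom K) ρ x := by
  induction x using MonoidAlgebra.induction with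
  | zero => exact ⟨1, one_ne_zero, 0, by intros; simp⟩
  | single_add a b f _ _ ih =>
    obtain ⟨m, hm, y, hy⟩ := ih
    refine ⟨b.den * m, mul_ne_zero b.den_nz hm,
      MonoidAlgebra.single a ((m : O) * (b.num : O)) + (b.den : O) • y, ?_⟩
    intro K _ _ W _ _ c ρ
    have hb : (b : K) * (b.den : K) = b.num := by
      exact_mod_cast congrArg (Rat.cast : ℚ → K) (Rat.mul_den_eq_num b)
    rw [map_add, map_add, actE_single, actE_single, actE_smul, hy, smul_add, smul_smul, smul_smul,
      map_mul, map_natCast, map_natCast, map_intCast, ← hb]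
    simp only [eq_ratCast, Nat.cast_mul]
    congr 2
    ring

theorem intg {O : Type} [CommRing O] {K : Type} [Field K] {p : ℕ} (hp : p.Prime)
    (hloc : ∀ x : O, ∃ s a : ℤ, ¬ (p : ℤ) ∣ s ∧ (s : O) * x = a)
    (c : O →+* K) (a : K) (ha : c.IsIntegralElem a) :
    ∃ s : ℤ, ¬ (p : ℤ) ∣ s ∧ IsIntegral ℤ ((s : K) * a) := by
  obtain ⟨P, hP, hP0⟩ := ha
  choose S A hS hA using fun i : ℕ => hloc (P.coeff i)
  have hp' : Prime (p : ℤ) := Nat.prime_iff_prime_int.1 hp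
  let s : ℤ := ∏ i ∈ Finset.range P.natDegree, S i
  have hs : ¬ (p : ℤ) ∣ s := by
    intro h
    obtain ⟨i, _, hi⟩ := (Prime.dvd_finsetProd_iff hp' _).1 h
    exact hS i hi
  have hl : P.scaleRoots (s : O) ∈ Polynomial.lifts (Int.castRingHom O) := by
    rw [Polynomial.lifts_iff_coeff_lifts]
    intro i
    rw [Polynomial.coeff_scaleRoots]
    rcases lt_trichotomy i P.natDegree with h | h | h
    · obtain ⟨u, hu⟩ := Finset.dvd_prod_of_mem S (Finset.mem_range.2 h)
      obtain ⟨k, hk⟩ : ∃ k, P.natDegree - i = k + 1 := ⟨P.natDegree - i - 1, by omega⟩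
      refine ⟨A i * u * s ^ k, ?_⟩
      have h1 : (s : O) = S i * u := by
        rw [← Int.cast_mul]; exact congrArg _ hu
      rw [hk, pow_succ]
      simp only [eq_intCast, Int.cast_mul, Int.cast_pow, ← hA]
      rw [h1]; ring
    · refine ⟨1, ?_⟩
      have := hP.coeff_natDegree
      rw [h, this]; simp
    · exact ⟨0, by rw [Polynomial.coeff_eq_zero_of_natDegree_lt h]; simp⟩
  obtain ⟨Q, hQ, _, hQm⟩ := Polynomial.lifts_and_natDegree_eq_and_monic hl
    ((Polynomial.monic_scaleRoots_iff _).2 hP)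
  refine ⟨s, hs, Q, hQm, ?_⟩
  have h2 := Polynomial.scaleRoots_eval₂_mul (p := P) c (s : O) (r := a)
  rw [hP0, mul_zero, ← hQ, Polynomial.eval₂_map, map_intCast] at h2
  rw [RingHom.ext_int (algebraMap ℤ K) (c.comp (Int.castRingHom O))]
  exact h2

end denom

/-! ### Core of the backward direction -/
section back
variable {O : Type} [CommRing O] [IsDomain O] [IsPrincipalIdealRing O] [IsLocalRing O]
  {G : Type} [Group G] [Fintype G] {K : Type} [Field K]
  {W : Type} [AddCommGroup W] [Module K W]

theorem isUnit_int {p : ℕ} (hp : p.Prime)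
    (hloc : ∀ x : O, ∃ s a : ℤ, ¬ (p : ℤ) ∣ s ∧ (s : O) * x = a)
    (hq : IsLocalRing.maximalIdeal O = Ideal.span {(p : O)}) [CharZero O]
    (s : ℤ) (hs : ¬ (p : ℤ) ∣ s) : IsUnit (s : O) := by
  by_contra h
  have h1 : (s : O) ∈ IsLocalRing.maximalIdeal O := (IsLocalRing.mem_maximalIdeal _).2 h
  rw [hq, Ideal.mem_span_singleton] at h1
  obtain ⟨y, hy⟩ := h1
  obtain ⟨s', a, hs', ha⟩ := hloc y
  have h2 : s' * s = p * a := by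
    have : ((s' * s : ℤ) : O) = ((p * a : ℤ) : O) := by
      push_cast
      rw [hy, ← ha]; ring
    exact_mod_cast this
  have hp' : Prime (p : ℤ) := Nat.prime_iff_prime_int.1 hp
  rcases hp'.dvd_or_dvd ⟨a, h2⟩ with h | h
  · exact hs' h
  · exact hs h

theorem scaled_root' (hcard : IsUnit (Nat.card G : O)) {e : MonoidAlgebra O G} (he : PrimIdem e)
    (c : O →+* K) (hc : Function.Injective c) (ρ : Representation K G W) (v : W) (hv : v ≠ 0)
    (hev : actE c ρ e v = v) {q : O} (hq : IsLocalRing.maximalIdeal O = Ideal.span {q})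
    (x : MonoidAlgebra O G) (hex : e * x = x) (hxe : x * e = x) (a : K) (ha : IsIntegral ℤ a)
    (s : O) (hs : IsUnit s) (t : K) (hst : c s * t = c q * a)
    (h : actE c ρ x v = t • v) : ∃ d : ℕ, redHom O G (x ^ (d + 1)) = 0 := by
  have ha' : c.IsIntegralElem a := by
    obtain ⟨P, hP, hP0⟩ := ha
    refine ⟨P.map (Int.castRingHom O), hP.map _, ?_⟩
    rw [Polynomial.eval₂_map]
    rw [RingHom.ext_int (algebraMap ℤ K) (c.comp (Int.castRingHom O))] at hP0
    exact hP0
  obtain ⟨d, hd⟩ := scaled_root hcard he c hc ρ v hv hev hq (s • x)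
    (by rw [mul_smul_comm, hex]) (by rw [smul_mul_assoc, hxe]) a ha'
    (by rw [actE_smul, LinearMap.smul_apply, h, smul_smul, hst])
  refine ⟨d, ?_⟩
  rw [redHom_eq_zero hq] at hd ⊢
  obtain ⟨y, hy⟩ := hd
  obtain ⟨u, hu⟩ := (hs.pow (d+1)).exists_left_inv
  refine ⟨u • y, ?_⟩
  rw [smul_comm, ← hy, smul_pow, smul_smul, hu, one_smul]

theorem idem_pow_zero {R : Type} [Ring R] (f : R) (hf : f * f = f) (d : ℕ) (h : f ^ (d+1) = 0) :
    f = 0 := by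
  rw [← h]; exact (IsIdempotentElem.pow_succ_eq d hf).symm

theorem back_core [CharZero K] [CharZero O] [FiniteDimensional K W]
    (hcard : IsUnit (Nat.card G : O)) {p : ℕ} (hp : p.Prime)
    (hloc : ∀ x : O, ∃ s a : ℤ, ¬ (p : ℤ) ∣ s ∧ (s : O) * x = a)
    (hq : IsLocalRing.maximalIdeal O = Ideal.span {(p : O)})
    (c : O →+* K) (hc : Function.Injective c) (ρ : Representation K G W)
    (H : ∀ φ : W →+ W, (∀ g w, φ (ρ g w) = ρ g (φ w)) → ∃ c : K, ∀ w, φ w = c • w)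
    (hpK : Prime (p : NumberField.RingOfIntegers K))
    {e : MonoidAlgebra O G} (he : PrimIdem e) (hne : actE c ρ e ≠ 0)
    (b : MonoidAlgebra (IsLocalRing.ResidueField O) G) (hb : b * b = b)
    (hb1 : redHom O G e * b = b) (hb2 : b * redHom O G e = b) : b = 0 ∨ b = redHom O G e := by
  obtain ⟨w0, hw0⟩ : ∃ w0, actE c ρ e w0 ≠ 0 := by
    by_contra! h
    exact hne (LinearMap.ext h)
  obtain ⟨w, hw⟩ : ∃ w, w = actE c ρ e w0 := ⟨_, rfl⟩
  rw [← hw] at hw0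
  have hew : actE c ρ e w = w := by
    rw [hw, ← Module.End.mul_apply, ← map_mul, he.1]
  have line : ∀ w', actE c ρ e w' = w' → ∃ t : K, w' = t • w := by
    intro w' hw'
    by_contra! hcon
    have hnm : w' ∉ Submodule.span K {w} := by
      intro h
      obtain ⟨t, ht⟩ := Submodule.mem_span_singleton.1 h
      exact hcon t ht.symm
    obtain ⟨f, hf, hf'⟩ := Submodule.exists_le_ker_of_notMem hnm
    obtain ⟨x, hx⟩ := dense ρ H (f.smulRight w')
    obtain ⟨m, hm, y, hy⟩ := clear_den O x
    have hy' := hy K W c ρ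
    rw [hx] at hy'
    have hfw : f w = 0 := hf' (Submodule.mem_span_singleton_self w)
    have hr := prim_act hcard he c hc ρ w hw0 hew (y * e) (by rw [mul_assoc, he.1])
      (by rw [map_mul, Module.End.mul_apply, hew, hy']; simp [hfw])
    have h2 : actE c ρ (y * e) w' = 0 := by rw [hr]; simp
    rw [map_mul, Module.End.mul_apply, hw', hy'] at h2
    simp only [LinearMap.smul_apply, LinearMap.smulRight_apply, smul_eq_zero] at h2
    rcases h2 with h2 | h2 | h2
    · exact hm (by exact_mod_cast h2)
    · exact hf h2
    · exact hcon 0 (by rw [h2, zero_smul])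
  have tau : ∀ x, e * x = x → ∃ t : K, actE c ρ x w = t • w := by
    intro x hx
    exact line _ (by rw [← Module.End.mul_apply, ← map_mul, hx])
  obtain ⟨z, hz⟩ := redHom_surj (O := O) (G := G) b
  obtain ⟨x, hx⟩ : ∃ x, x = e * z * e := ⟨_, rfl⟩
  have hex : e * x = x := by rw [hx, ← mul_assoc, ← mul_assoc, he.1]
  have hxe : x * e = x := by rw [hx, mul_assoc, he.1]
  have hxb : redHom O G x = b := by rw [hx, map_mul, map_mul, hz, hb1, hb2]
  obtain ⟨y0, hy0⟩ := (redHom_eq_zero hq (x * x - x)).1 (by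
    rw [map_sub, map_mul, hxb, hb, sub_self])
  obtain ⟨y, hy⟩ : ∃ y, y = e * y0 * e := ⟨_, rfl⟩
  have hey : e * y = y := by rw [hy, ← mul_assoc, ← mul_assoc, he.1]
  have hxy : x * x - x = (p : O) • y := by
    rw [hy, ← smul_mul_assoc, ← mul_smul_comm, ← hy0, mul_sub, sub_mul, hex, ← mul_assoc, hex, hxe,
      mul_assoc, hxe]
  obtain ⟨t, ht⟩ := tau x hex
  obtain ⟨u, hu⟩ := tau y hey
  have htu : t * t - t = p * u := by
    have h1 := congrArg (fun r => actE c ρ r w) hxy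
    simp only [map_sub, map_mul, actE_smul, LinearMap.sub_apply, Module.End.mul_apply,
      LinearMap.smul_apply, ht, hu, map_smul, smul_smul, ← sub_smul] at h1
    have := smul_left_injective K hw0 h1
    simpa using this
  obtain ⟨s1, hs1, hi1⟩ := intg hp hloc c t (integral_act c ρ w hw0 x t ht)
  obtain ⟨s2, hs2, hi2⟩ := intg hp hloc c u (integral_act c ρ w hw0 y u hu)
  have hp' : Prime (p : ℤ) := Nat.prime_iff_prime_int.1 hp
  obtain ⟨s, hs⟩ : ∃ s, s = s1 * s2 := ⟨_, rfl⟩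
  have hsp : ¬ (p : ℤ) ∣ s := by
    rw [hs]; intro h; rcases hp'.dvd_or_dvd h with h | h
    · exact hs1 h
    · exact hs2 h
  have hsu : IsUnit (s : O) := isUnit_int hp hloc hq s hsp
  have hint : ∀ n : ℤ, IsIntegral ℤ (n : K) := fun n => isIntegral_algebraMap (R := ℤ) (A := K)
  have hbi : IsIntegral ℤ ((s : K) * t) := by
    have h1 : (s : K) * t = (s2 : K) * ((s1 : K) * t) := by rw [hs]; push_cast; ring
    rw [h1]
    exact (hint s2).mul hi1
  have hgi : IsIntegral ℤ ((s : K) * u) := by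
    have h1 : (s : K) * u = (s1 : K) * ((s2 : K) * u) := by rw [hs]; push_cast; ring
    rw [h1]
    exact (hint s1).mul hi2
  let β : NumberField.RingOfIntegers K := ⟨_, hbi⟩
  let γ : NumberField.RingOfIntegers K := ⟨_, hgi⟩
  have hβ : (β : K) = s * t := rfl
  have hγ : (γ : K) = s * u := rfl
  have hmul : β * (β - (s : NumberField.RingOfIntegers K)) = p * (s * γ) := by
    apply NumberField.RingOfIntegers.ext
    simp only [map_mul, map_sub, map_natCast, map_intCast, hβ, hγ]
    linear_combination (s : K)^2 * htu
  rcases hpK.dvd_or_dvd ⟨_, hmul⟩ with ⟨δ, hδ⟩ | ⟨δ, hδ⟩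
  · left
    have hδ' := congrArg (algebraMap (NumberField.RingOfIntegers K) K) hδ
    simp only [map_mul, map_natCast, hβ] at hδ'
    obtain ⟨d, hd⟩ := scaled_root' hcard he c hc ρ w hw0 hew hq x hex hxe δ δ.2 (s : O) hsu t
      (by simpa using hδ') ht
    rw [map_pow, hxb] at hd
    exact idem_pow_zero b hb d hd
  · right
    have hδ' := congrArg (algebraMap (NumberField.RingOfIntegers K) K) hδ
    simp only [map_mul, map_sub, map_natCast, map_intCast, hβ] at hδ'
    obtain ⟨d, hd⟩ := scaled_root' hcard he c hc ρ w hw0 hew hq (e - x)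
      (by rw [mul_sub, hex, he.1]) (by rw [sub_mul, hxe, he.1]) (-δ) δ.2.neg (s : O) hsu (1 - t)
      (by simp only [map_intCast, map_natCast]; linear_combination - hδ')
      (by rw [map_sub, LinearMap.sub_apply, hew, ht, sub_smul, one_smul])
    rw [map_pow, map_sub, hxb] at hd
    have := idem_pow_zero _ (by
      have : redHom O G e * redHom O G e = redHom O G e := by rw [← map_mul, he.1]
      rw [mul_sub, sub_mul, sub_mul, hb, hb1, hb2, this]; abel) d hd
    exact (sub_eq_zero.1 this).symm

end back

/-! ### Rationality of intertwiners -/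
section schur
variable {G : Type} [Group G] [Fintype G] {K : Type} [Field K] [CharZero K]
  {W : Type} [AddCommGroup W] [Module K W] [FiniteDimensional K W]

theorem lin_scalar (ρ : Representation K G W)
    (hn : ∑ g : G, LinearMap.trace K W (ρ g) * LinearMap.trace K W (ρ g⁻¹) = Nat.card G) :
    Nontrivial W ∧ ∀ f : Module.End K W, (∀ g w, f (ρ g w) = ρ g (f w)) → ∃ c : K, ∀ w, f w = c • w := by
  have := invertibleOfNonzero (NeZero.ne (Nat.card G : K))
  have h1 := Representation.card_inv_mul_sum_char_mul_char_eq_finrank ρ ρ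
  have h2 : ∑ g : G, ρ.character g * ρ.character g⁻¹ = Nat.card G := hn
  rw [h2, inv_mul_cancel₀ (NeZero.ne _)] at h1
  have h3 : Module.finrank K (Representation.IntertwiningMap ρ ρ) = 1 := by exact_mod_cast h1.symm
  have hnt : Nontrivial W := by
    by_contra hW
    rw [not_nontrivial_iff_subsingleton] at hW
    have : ∀ g : G, LinearMap.trace K W (ρ g) = 0 := fun g => by
      rw [Subsingleton.elim (ρ g) 0, map_zero]
    simp only [this, mul_zero, Finset.sum_const_zero] at hn
    exact NeZero.ne (Nat.card G : K) hn.symm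
  refine ⟨hnt, ?_⟩
  intro f hf
  have hid : (Representation.IntertwiningMap.id ρ) ≠ 0 := by
    intro h
    obtain ⟨w, hw⟩ := exists_ne (0 : W)
    exact hw (congrArg (fun f => f.toLinearMap w) h)
  obtain ⟨c, hc⟩ := (finrank_eq_one_iff_of_nonzero' _ hid).1 h3
    (f.intertwiningMap_of_isIntertwiningMap ρ ρ hf)
  refine ⟨c, fun w => ?_⟩
  exact (congrArg (fun f => f.toLinearMap w) hc).symm

theorem add_commutes (ρ : Representation K G W)
    (hn : ∑ g : G, LinearMap.trace K W (ρ g) * LinearMap.trace K W (ρ g⁻¹) = Nat.card G)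
    (φ : W →+ W) (hφ : ∀ g w, φ (ρ g w) = ρ g (φ w)) (hQ : ∀ (r : ℚ) w, φ ((r : K) • w) = (r : K) • φ w)
    (g : G) (w : W) :
    φ (LinearMap.trace K W (ρ g) • w) = LinearMap.trace K W (ρ g) • φ w := by
  obtain ⟨hnt, hs⟩ := lin_scalar ρ hn
  obtain ⟨c, hc⟩ := hs (∑ h : G, ρ (h * g * h⁻¹)) (by
    intro k w
    simp only [LinearMap.sum_apply, map_sum, ← Module.End.mul_apply, ← map_mul]
    refine Fintype.sum_equiv (Equiv.mulLeft k⁻¹) _ _ fun h => ?_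
    congr 2
    simp [mul_assoc])
  have htr : ∀ h : G, LinearMap.trace K W (ρ (h * g * h⁻¹)) = LinearMap.trace K W (ρ g) :=
    fun h => Representation.char_conj ρ g h
  have h1 : (Nat.card G : K) * LinearMap.trace K W (ρ g) = c * Module.finrank K W := by
    have h2 : (∑ h : G, ρ (h * g * h⁻¹)) = c • (1 : Module.End K W) := LinearMap.ext hc
    have h3 := congrArg (LinearMap.trace K W) h2
    rw [map_sum, map_smul, LinearMap.trace_one] at h3
    simp only [htr, Finset.sum_const, Finset.card_univ, nsmul_eq_mul, smul_eq_mul] at h3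
    rw [← h3, Fintype.card_eq_nat_card]
  have hcc : ∀ w, φ (c • w) = c • φ w := by
    intro w
    rw [← hc, ← hc]
    simp only [LinearMap.sum_apply, map_sum, hφ]
  have hG : (Nat.card G : K) ≠ 0 := NeZero.ne _
  have h4 : LinearMap.trace K W (ρ g) = ((Module.finrank K W / Nat.card G : ℚ) : K) * c := by
    push_cast
    field_simp
    linear_combination h1
  rw [h4, mul_smul, mul_smul, hQ, hcc]

theorem add_scalar (χ : G → ℂ) (n : ℕ) (ρ : Representation (charField χ) G (Fin n → charField χ))
    (hρ : ∀ g : G, algebraMap (charField χ) ℂ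
          (LinearMap.trace (charField χ) (Fin n → charField χ) (ρ g)) = χ g)
    (hχ : ∑ g : G, χ g * χ g⁻¹ = Nat.card G)
    (φ : (Fin n → charField χ) →+ (Fin n → charField χ)) (hφ : ∀ g w, φ (ρ g w) = ρ g (φ w)) :
    ∃ c : charField χ, ∀ w, φ w = c • w := by
  have hn : ∑ g : G, LinearMap.trace (charField χ) (Fin n → charField χ) (ρ g) *
      LinearMap.trace (charField χ) (Fin n → charField χ) (ρ g⁻¹) = Nat.card G := by
    apply (algebraMap (charField χ) ℂ).injective
    rw [map_sum, map_natCast, ← hχ]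
    simp only [map_mul, hρ]
  have hQ : ∀ (r : ℚ) w, φ ((r : charField χ) • w) = (r : charField χ) • φ w := by
    intro r w
    have h1 : ∀ w : Fin n → charField χ, (r : charField χ) • w = r • w := fun w => by
      rw [Rat.cast_smul_eq_qsmul]
    rw [h1, h1]
    exact map_rat_smul φ r w
  have key : ∀ (c : ℂ) (h : c ∈ charField χ), ∀ w, φ ((⟨c, h⟩ : charField χ) • w) =
      (⟨c, h⟩ : charField χ) • φ w := by
    intro c h
    refine IntermediateField.adjoin_induction (F := ℚ) (E := ℂ) (s := Set.range χ)
      (p := fun x hx => ∀ w, φ ((⟨x, hx⟩ : charField χ) • w) = (⟨x, hx⟩ : charField χ) • φ w)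
      ?_ ?_ ?_ ?_ ?_ h
    · rintro x ⟨g, rfl⟩ w
      have h1 : (⟨χ g, IntermediateField.subset_adjoin _ _ ⟨g, rfl⟩⟩ : charField χ) =
          LinearMap.trace (charField χ) (Fin n → charField χ) (ρ g) := Subtype.ext (hρ g).symm
      rw [h1]
      exact add_commutes ρ hn φ hφ hQ g w
    · intro r w
      have h1 : (⟨algebraMap ℚ ℂ r, IntermediateField.algebraMap_mem _ _⟩ : charField χ) =
        (r : charField χ) := Subtype.ext (by simp)
      rw [h1, hQ]
    · intro x y hx hy h1 h2 w
      have h3 : (⟨x + y, add_mem hx hy⟩ : charField χ) = ⟨x, hx⟩ + ⟨y, hy⟩ := rfl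
      rw [h3, add_smul, add_smul, map_add, h1, h2]
    · intro x hx h1 w
      have h3 : (⟨x⁻¹, inv_mem hx⟩ : charField χ) = (⟨x, hx⟩ : charField χ)⁻¹ := rfl
      rw [h3]
      by_cases h0 : (⟨x, hx⟩ : charField χ) = 0
      · rw [h0, inv_zero, zero_smul, zero_smul, map_zero]
      · apply smul_right_injective _ h0
        show (⟨x, hx⟩ : charField χ) • _ = (⟨x, hx⟩ : charField χ) • _
        rw [← h1, smul_inv_smul₀ h0, smul_inv_smul₀ h0]
    · intro x y hx hy h1 h2 w
      have h3 : (⟨x * y, mul_mem hx hy⟩ : charField χ) = ⟨x, hx⟩ * ⟨y, hy⟩ := rfl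
      rw [h3, mul_smul, mul_smul, h1, h2]
  exact (lin_scalar ρ hn).2 { φ with map_smul' := fun c w => key c.1 c.2 w } hφ

theorem trace_actE {O : Type} [CommRing O] {L : Type} [Field L] {U : Type} [AddCommGroup U]
    [Module L U] (c : O →+* K) (j : K →+* L) (ρ : Representation K G W) (σ : Representation L G U)
    (h : ∀ g, j (LinearMap.trace K W (ρ g)) = LinearMap.trace L U (σ g)) (x : MonoidAlgebra O G) :
    j (LinearMap.trace K W (actE c ρ x)) = LinearMap.trace L U (actE (j.comp c) σ x) := by
  induction x using MonoidAlgebra.induction with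
  | zero => simp
  | single_add a b f _ _ ih =>
    simp only [map_add, ih, actE_single, map_smul, smul_eq_mul, map_mul, h]; rfl

theorem actE_ne_zero {O : Type} [CommRing O] {L : Type} [Field L] [CharZero L] {U : Type}
    [AddCommGroup U] [Module L U] [FiniteDimensional L U]
    (c : O →+* K) (j : K →+* L) (ρ : Representation K G W) (σ : Representation L G U)
    (h : ∀ g, j (LinearMap.trace K W (ρ g)) = LinearMap.trace L U (σ g)) (x : MonoidAlgebra O G)
    (hx : x * x = x) (hne : actE (j.comp c) σ x ≠ 0) : actE c ρ x ≠ 0 := by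
  intro h0
  have h1 := trace_actE c j ρ σ h x
  rw [h0, map_zero, map_zero] at h1
  apply hne
  exact (LinearMap.IsIdempotentElem.eq_zero_of_trace_eq_zero (by
    rw [IsIdempotentElem, ← map_mul, hx]) h1.symm)
end schur

/-! ### The backward direction -/
section back2
variable {O : Type} [CommRing O] [IsDomain O] [IsPrincipalIdealRing O] [IsLocalRing O]
  {G : Type} [Group G] [Fintype G]

open CategoryTheory in
theorem simple_of_module (N : Type) [AddCommGroup N] [Module (MonoidAlgebra ℂ G) N]
    [Module.Finite (MonoidAlgebra ℂ G) N] [Module ℂ N] [IsScalarTower ℂ (MonoidAlgebra ℂ G) N]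
    (hN : IsSimpleModule (MonoidAlgebra ℂ G) N) (c : O →+* ℂ) (e : MonoidAlgebra O G)
    (n : N) (hn : MonoidAlgebra.mapRingHom G c e • n ≠ 0) :
    ∃ V : FDRep ℂ G, Simple V ∧ actE c V.ρ e ≠ 0 := by
  have hfin : Module.Finite ℂ N := Module.Finite.trans (MonoidAlgebra ℂ G) _
  let σ := Representation.ofModule' (k := ℂ) (G := G) N
  have hσ : ∀ (r : MonoidAlgebra ℂ G) (m : N), σ.asAlgebraHom r m = r • m := by
    intro r m
    have : σ.asAlgebraHom = Algebra.lsmul ℂ ℂ N :=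
      (MonoidAlgebra.lift ℂ (N →ₗ[ℂ] N) G).apply_symm_apply _
    rw [this]; rfl
  let E : σ.asModule ≃ₗ[MonoidAlgebra ℂ G] N :=
    { σ.asModuleEquiv with
      map_smul' := fun r x => (σ.asModuleEquiv_map_smul r x).trans (hσ _ _) }
  have hirr : σ.IsIrreducible := by
    rw [Representation.irreducible_iff_isSimpleModule_asModule]
    exact IsSimpleModule.congr E
  refine ⟨FDRep.of σ, ?_, ?_⟩
  · rw [FDRep.simple_iff_char_is_norm_one]
    have := invertibleOfNonzero (NeZero.ne (Nat.card G : ℂ))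
    have h1 := Representation.char_orthonormal σ σ
    rw [if_pos ⟨Representation.Equiv.refl σ⟩, inv_mul_eq_one₀ (NeZero.ne _)] at h1
    exact h1.symm
  · intro h
    apply hn
    have h1 : actE c σ e n = 0 := by
      have : actE c σ e = 0 := h
      rw [this]; rfl
    exact (hσ _ _).symm.trans h1

open CategoryTheory in
theorem exists_simple (c : O →+* ℂ) (hc : Function.Injective c) (e : MonoidAlgebra O G)
    (he : e ≠ 0) : ∃ V : FDRep ℂ G, Simple V ∧ actE c V.ρ e ≠ 0 := by
  set e' := MonoidAlgebra.mapRingHom G c e with he'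
  have hne : e' ≠ 0 := by
    intro h
    apply he
    ext g
    have h1 : e'.coeff g = 0 := by rw [h]; rfl
    apply hc
    have h2 : c (e.coeff g) = 0 := by
      rw [← h1, he']; simp
    rw [h2]; exact (map_zero c).symm
  have : NeZero (Nat.card G : ℂ) := ⟨by exact_mod_cast Nat.card_pos.ne'⟩
  obtain ⟨N, hN, n, hn⟩ : ∃ N : Submodule (MonoidAlgebra ℂ G) (MonoidAlgebra ℂ G),
      IsSimpleModule (MonoidAlgebra ℂ G) N ∧ ∃ n : N, e' • n ≠ 0 := by
    by_contra! hcon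
    have h1 : (1 : MonoidAlgebra ℂ G) ∈ sSup {m : Submodule (MonoidAlgebra ℂ G) (MonoidAlgebra ℂ G) |
        IsSimpleModule (MonoidAlgebra ℂ G) m} := by
      rw [IsSemisimpleModule.sSup_simples_eq_top]; trivial
    rw [sSup_eq_iSup'] at h1
    have h2 : e' * 1 = 0 := by
      refine Submodule.iSup_induction _ (motive := fun x => e' * x = 0) h1 ?_ (mul_zero _) ?_
      · rintro ⟨N, hN⟩ x hx
        exact congrArg Subtype.val (hcon N hN ⟨x, hx⟩)
      · intro x y hx hy; rw [mul_add, hx, hy, add_zero]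
    exact hne (by simpa using h2)
  exact simple_of_module N hN c e n hn

open CategoryTheory in
theorem back_dir [CharZero O] (hcard : IsUnit (Nat.card G : O)) {p : ℕ} (hp : p.Prime)
    (hloc : ∀ x : O, ∃ s a : ℤ, ¬ (p : ℤ) ∣ s ∧ (s : O) * x = a)
    (hq : IsLocalRing.maximalIdeal O = Ideal.span {(p : O)})
    (j : O →+* ℚ) (hj : Function.Injective j)
    (h : ∀ V : FDRep ℂ G, Simple V → schurIndex V.character = 1 ∧
        Prime (p : NumberField.RingOfIntegers (charField V.character))) :
    IsSemiperfectRing (MonoidAlgebra O G) := by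
  rw [isSemiperfect_iff hcard]
  refine lift_of_prim (redHom O G) redHom_surj (redHom_regular hcard) ?_
  intro e he b hb hb1 hb2
  obtain ⟨V, hV, hne⟩ := exists_simple ((Rat.castHom ℂ).comp j)
    ((Rat.castHom ℂ).injective.comp hj) e he.2.1
  obtain ⟨h1, h2⟩ := h V hV
  have hmem := Nat.sInf_mem (Nat.nonempty_of_pos_sInf (by
    have : 0 < schurIndex V.character := by rw [h1]; exact one_pos
    exact this))
  obtain ⟨-, n, ρ, hρ⟩ := hmem
  have hρ' : ∀ g : G, algebraMap (charField V.character) ℂ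
          (LinearMap.trace (charField V.character) (Fin n → charField V.character) (ρ g)) =
          V.character g := by
    intro g
    have := hρ g
    have h1' : ((schurIndex V.character : ℕ) : ℂ) = 1 := by rw [h1]; simp
    rw [← one_mul (V.character g), ← h1']
    exact this
  refine back_core hcard hp hloc hq ((Rat.castHom (charField V.character)).comp j)
    ((Rat.castHom (charField V.character)).injective.comp hj) ρ
    (add_scalar V.character n ρ hρ' ((FDRep.simple_iff_char_is_norm_one V).1 hV)) h2 he ?_ b hb hb1 hb2
  refine actE_ne_zero _ (algebraMap (charField V.character) ℂ) ρ V.ρ hρ' e he.1 ?_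
  convert hne using 3
  exact RingHom.ext fun x => by simp
end back2

/-! ### Structure of the corner ring -/
section corner

theorem corner_dom {F : Type} [Ring F] (hreg : ∀ x : F, ∃ y, x = x * y * x) (ε : F)
    (hε : ε * ε = ε)
    (hprim : ∀ b : F, b * b = b → ε * b = b → b * ε = b → b = 0 ∨ b = ε)
    (x y : F) (hx : x * ε = x) (hx' : ε * x = x) (hy : ε * y = y) (hxy : x * y = 0) :
    x = 0 ∨ y = 0 := by
  obtain ⟨z, hz⟩ := hreg x
  have h1 : x = x * (ε * z * x) := by
    rw [← mul_assoc, ← mul_assoc, hx]; exact hz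
  rcases hprim (ε * z * x) (by
      calc _ = ε * z * (x * (ε * z * x)) := by simp only [mul_assoc]
        _ = _ := by rw [← h1])
      (by rw [← mul_assoc, ← mul_assoc, hε]) (by rw [mul_assoc, hx]) with h | h
  · left; rw [h, mul_zero] at h1; exact h1
  · right
    rw [← hy, ← h, mul_assoc, hxy, mul_zero]

theorem corner_cyclic {F : Type} [Ring F] [Finite F] (hreg : ∀ x : F, ∃ y, x = x * y * x) (ε : F)
    (hε : ε * ε = ε) (hε0 : ε ≠ 0)
    (hprim : ∀ b : F, b * b = b → ε * b = b → b * ε = b → b = 0 ∨ b = ε) :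
    ∃ g : F, ε * g = g ∧ g * ε = g ∧ ∀ x, ε * x = x → x * ε = x → x = 0 ∨ ∃ n : ℕ, x = ε * g ^ n := by
  have hid : IsIdempotentElem ε := hε
  have hm : ∀ x : hid.Corner, ε * x.1 = x.1 ∧ x.1 * ε = x.1 := by
    rintro ⟨_, y, rfl⟩
    constructor
    · simp only [← mul_assoc, hε]
    · simp only [mul_assoc, hε]
  have hfin : Finite hid.Corner := Finite.of_injective (fun x => x.1) Subtype.val_injective
  have hnt : Nontrivial hid.Corner := ⟨0, 1, fun h => hε0 (congrArg Subtype.val h).symm⟩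
  have hnzd : NoZeroDivisors hid.Corner := ⟨by
    intro a b hab
    rcases corner_dom hreg ε hε hprim a.1 b.1 (hm a).2 (hm a).1 (hm b).1 (congrArg Subtype.val hab)
      with h | h
    · exact Or.inl (Subtype.ext h)
    · exact Or.inr (Subtype.ext h)⟩
  have hdom : IsDomain hid.Corner := NoZeroDivisors.to_isDomain _
  have hfield := Finite.isDomain_to_isField hid.Corner
  letI : Field hid.Corner := hfield.toField
  obtain ⟨g, hg⟩ := IsCyclic.exists_monoid_generator (α := (hid.Corner)ˣ)
  refine ⟨g.1.1, (hm _).1, (hm _).2, ?_⟩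
  intro x hx hx'
  by_cases h0 : x = 0
  · exact Or.inl h0
  right
  have hxm : x ∈ Subsemigroup.corner ε := ⟨x, by simp only [hx, hx']⟩
  obtain ⟨X, hX⟩ : ∃ X : hid.Corner, X.1 = x := ⟨⟨x, hxm⟩, rfl⟩
  have hu : IsUnit X := by
    rw [isUnit_iff_ne_zero]
    intro h
    apply h0
    rw [← hX, h]; rfl
  obtain ⟨u, hu⟩ := hu
  obtain ⟨n, hn⟩ := Submonoid.mem_powers_iff _ _ |>.1 (hg u)
  refine ⟨n, ?_⟩
  have hpow : ∀ n : ℕ, ((g.1 ^ n : hid.Corner)).1 = ε * g.1.1 ^ n := by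
    intro n
    induction n with
    | zero => rw [pow_zero, pow_zero, mul_one]; rfl
    | succ n ih =>
      rw [pow_succ, pow_succ, ← mul_assoc, ← ih]; rfl
  rw [← hpow, ← Units.val_pow_eq_pow_val, hn, hu, hX]

variable {O : Type} [CommRing O] [IsDomain O] [IsPrincipalIdealRing O] [IsLocalRing O]
  {G : Type} [Group G] [Fintype G]

theorem corner_div {e : MonoidAlgebra O G} (he : e * e = e)
    {q : O} (hq : IsLocalRing.maximalIdeal O = Ideal.span {q}) (x : MonoidAlgebra O G)
    (h1 : e * x = x) (h2 : x * e = x) (h : redHom O G x = 0) :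
    ∃ y, e * y = y ∧ y * e = y ∧ x = q • y := by
  obtain ⟨y, hy⟩ := (redHom_eq_zero hq x).1 h
  refine ⟨e * y * e, by rw [← mul_assoc, ← mul_assoc, he], by rw [mul_assoc, he], ?_⟩
  rw [← smul_mul_assoc, ← mul_smul_comm, ← hy, h1, h2]

theorem corner_span [Finite (IsLocalRing.ResidueField O)] (hcard : IsUnit (Nat.card G : O))
    {e : MonoidAlgebra O G} (he : PrimIdem e)
    {q : O} (hq : IsLocalRing.maximalIdeal O = Ideal.span {q})
    (hl : ∀ x : MonoidAlgebra (IsLocalRing.ResidueField O) G, x * x = x →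
        ∃ f : MonoidAlgebra O G, f * f = f ∧ redHom O G f = x) :
    (∀ x y, e * x = x → x * e = x → e * y = y → redHom O G (x * y) = 0 →
      redHom O G x = 0 ∨ redHom O G y = 0) ∧
    ∃ a, e * a = a ∧ a * e = a ∧ ∀ x, e * x = x → x * e = x →
      x ∈ Submodule.span O (Set.range fun n : ℕ => e * a ^ n) := by
  have hprim := prim_of_lift (redHom O G) redHom_unit hl e he
  have hee : redHom O G e * redHom O G e = redHom O G e := by rw [← map_mul, he.1]
  refine ⟨fun x y hx hx' hy hxy => corner_dom (redHom_regular hcard) _ hee hprim _ _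
    (by rw [← map_mul, hx']) (by rw [← map_mul, hx]) (by rw [← map_mul, hy])
    (by rw [← map_mul, hxy]), ?_⟩
  have : Finite (MonoidAlgebra (IsLocalRing.ResidueField O) G) :=
    Finite.of_injective (fun x => (fun g => x.coeff g : G → IsLocalRing.ResidueField O))
      (fun x y h => by ext g; exact congrFun h g)
  obtain ⟨g, hg1, hg2, hg⟩ := corner_cyclic (redHom_regular hcard) _ hee
    (fun h => he.2.1 (redHom_idem_zero e he.1 h)) hprim
  obtain ⟨z, hz⟩ := redHom_surj (O := O) (G := G) g
  obtain ⟨a, ha⟩ : ∃ a, a = e * z * e := ⟨_, rfl⟩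
  have hea : e * a = a := by rw [ha, ← mul_assoc, ← mul_assoc, he.1]
  have hae : a * e = a := by rw [ha, mul_assoc, he.1]
  have hag : redHom O G a = g := by rw [ha, map_mul, map_mul, hz, hg1, hg2]
  refine ⟨a, hea, hae, ?_⟩
  have hea' : ∀ n : ℕ, e * a ^ n * e = e * a ^ n := by
    intro n
    have : Commute e a := by rw [Commute, SemiconjBy, hea, hae]
    rw [mul_assoc, ← (this.pow_right n).eq, ← mul_assoc, he.1]
  let Γ : Submodule O (MonoidAlgebra O G) :=
    { carrier := {x | e * x = x ∧ x * e = x}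
      add_mem' := fun {x y} hx hy => ⟨by rw [mul_add, hx.1, hy.1], by rw [add_mul, hx.2, hy.2]⟩
      zero_mem' := ⟨mul_zero _, zero_mul _⟩
      smul_mem' := fun c x hx => ⟨by rw [mul_smul_comm, hx.1], by rw [smul_mul_assoc, hx.2]⟩ }
  have hΓ : Γ ≤ Submodule.span O (Set.range fun n : ℕ => e * a ^ n) := by
    refine Submodule.le_of_le_smul_of_le_jacobson_bot (I := IsLocalRing.maximalIdeal O)
      (IsNoetherian.noetherian Γ) (by rw [IsLocalRing.jacobson_eq_maximalIdeal _ bot_ne_top]) ?_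
    have key : ∀ x ∈ Γ, redHom O G x = 0 → x ∈ IsLocalRing.maximalIdeal O • Γ := by
      intro x hx h0
      obtain ⟨y, h1, h2, rfl⟩ := corner_div he.1 hq x hx.1 hx.2 h0
      exact Submodule.smul_mem_smul (by rw [hq]; exact Ideal.mem_span_singleton_self _) ⟨h1, h2⟩
    intro x hx
    rcases hg (redHom O G x) (by rw [← map_mul, hx.1]) (by rw [← map_mul, hx.2]) with h | ⟨n, h⟩
    · exact Submodule.mem_sup_right (key x hx h)
    · have hm : e * a ^ n ∈ Γ := ⟨by rw [← mul_assoc, he.1], hea' n⟩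
      have h1 := key (x - e * a ^ n) (Γ.sub_mem hx hm) (by
        rw [map_sub, h, map_mul, map_pow, hag, sub_self])
      rw [← add_sub_cancel (e * a ^ n) x]
      exact Submodule.add_mem_sup (Submodule.subset_span ⟨n, rfl⟩) h1
  exact fun x h1 h2 => hΓ ⟨h1, h2⟩
end corner

/-! ### Rational forms -/
section ratform

theorem dense_gen {k : Type} [Field k] {K : Type} [Field K] {G : Type} [Group G]
  {W : Type} [AddCommGroup W] [Module K W] [Finite G] [NeZero (Nat.card G : k)]
  [FiniteDimensional K W] (c : k →+* K) (ρ : Representation K G W)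
    (h : ∀ φ : W →+ W, (∀ g w, φ (ρ g w) = ρ g (φ w)) → (∀ a w, φ (c a • w) = c a • φ w) →
      ∃ c : K, ∀ w, φ w = c • w)
    (f : Module.End K W) : ∃ x : MonoidAlgebra k G, actE c ρ x = f := by
  letI : Module (MonoidAlgebra k G) W := Module.compHom W (actE c ρ)
  have hsm : ∀ (x : MonoidAlgebra k G) (w : W), x • w = actE c ρ x w :=
    fun _ _ => rfl
  have hss : IsSemisimpleModule (MonoidAlgebra k G) W := inferInstance
  let f' : Module.End (Module.End (MonoidAlgebra k G) W) W :=
    { toFun := f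
      map_add' := f.map_add
      map_smul' := by
        intro φ w
        obtain ⟨c, hc⟩ := h φ.toAddMonoidHom (by
          intro g w
          have h1 := φ.map_smul (MonoidAlgebra.single g (1 : k)) w
          simp only [hsm, actE_single, map_one, one_smul] at h1
          exact h1) (by
          intro a w
          have h1 := φ.map_smul (MonoidAlgebra.single 1 a) w
          simp only [hsm, actE_single, map_one] at h1
          exact h1)
        have hc' : ∀ w, φ w = c • w := hc
        simp only [Module.End.smul_def, RingHom.id_apply]
        rw [hc', hc', map_smul] }
  classical
  let b := Module.finBasis K W
  obtain ⟨r, hr⟩ := jacobson_density f' (Finset.univ.image b)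
  refine ⟨r, b.ext fun i => ?_⟩
  exact (hr (b i) (Finset.mem_image_of_mem _ (Finset.mem_univ _))).symm

theorem actE_mem {k : Type} [CommRing k] {K : Type} [Field K] {G : Type} [Group G]
    {W : Type} [AddCommGroup W] [Module K W] (c : k →+* K) (ρ : Representation K G W)
    (S : Submodule K W) (hS : ∀ g, ∀ w ∈ S, ρ g w ∈ S) (x : MonoidAlgebra k G) (w : W)
    (hw : w ∈ S) : actE c ρ x w ∈ S := by
  induction x using MonoidAlgebra.induction with
  | zero => simp
  | single_add a b f _ _ ih =>
    rw [map_add, actE_single, LinearMap.add_apply, LinearMap.smul_apply]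
    exact S.add_mem (S.smul_mem _ (hS _ _ hw)) ih

theorem irr_top {K : Type} [Field K] [CharZero K] {G : Type} [Group G] [Fintype G]
    {V : Type} [AddCommGroup V] [Module K V] [FiniteDimensional K V] (ρ : Representation K G V)
    (hn : ∑ g : G, LinearMap.trace K V (ρ g) * LinearMap.trace K V (ρ g⁻¹) = Nat.card G)
    (S : Submodule K V) (hS : ∀ g, ∀ w ∈ S, ρ g w ∈ S) (s : V) (hs : s ∈ S) (hs0 : s ≠ 0) :
    S = ⊤ := by
  rw [eq_top_iff]
  intro u _
  obtain ⟨f, hf, -⟩ := Submodule.exists_le_ker_of_notMem (p := (⊥ : Submodule K V)) (v := s)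
    (by simpa using hs0)
  obtain ⟨x, hx⟩ := dense_gen (RingHom.id K) ρ (by
    intro φ h1 h2
    exact (lin_scalar ρ hn).2 { φ with map_smul' := h2 } h1) (f.smulRight ((f s)⁻¹ • u))
  have := actE_mem (RingHom.id K) ρ S hS x s hs
  rw [hx, LinearMap.smulRight_apply, smul_inv_smul₀ hf] at this
  exact this

theorem base_trace {k : Type} [Field k] {K : Type} [Field K] (j : k →+* K)
    {W : Type} [AddCommGroup W] [Module k W] {V : Type} [AddCommGroup V] [Module K V]
    {ι : Type} [Fintype ι] (i : W →+ V) (hi : ∀ a w, i (a • w) = j a • i w)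
    (b : Module.Basis ι k W) (B : Module.Basis ι K V) (hB : ∀ l, B l = i (b l))
    (T : Module.End K V) (T0 : Module.End k W) (hT : ∀ w, T (i w) = i (T0 w)) :
    LinearMap.trace K V T = j (LinearMap.trace k W T0) := by
  classical
  rw [LinearMap.trace_eq_matrix_trace K B, LinearMap.trace_eq_matrix_trace k b, Matrix.trace,
    Matrix.trace, map_sum]
  refine Finset.sum_congr rfl fun l _ => ?_
  rw [Matrix.diag_apply, Matrix.diag_apply, LinearMap.toMatrix_apply, LinearMap.toMatrix_apply,
    hB, hT]
  have h1 : ∀ w, B.repr (i w) l = j (b.repr w l) := by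
    intro w
    conv_lhs => rw [← b.sum_repr w]
    simp only [map_sum, hi, ← hB, map_smul, Module.Basis.repr_self, Finsupp.coe_finsetSum,
      Finset.sum_apply, Finsupp.smul_apply, smul_eq_mul]
    rw [Finset.sum_eq_single l]
    · simp
    · intro m _ hm; simp [hm]
    · simp
  rw [h1]

variable {G : Type} [Group G] [Fintype G] {V : Type} [AddCommGroup V] [Module ℂ V]

/-- The algebra of scalars by which rational elements act on a given vector. -/
noncomputable def eigAlg (ρ : Representation ℂ G V) (v : V) : Subalgebra ℚ ℂ where
  carrier := {c | ∃ x : MonoidAlgebra ℚ G, actE (Rat.castHom ℂ) ρ x v = c • v}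
  mul_mem' := by
    rintro a b ⟨x, hx⟩ ⟨y, hy⟩
    exact ⟨x * y, by rw [map_mul, Module.End.mul_apply, hy, map_smul, hx, smul_smul, mul_comm]⟩
  add_mem' := by
    rintro a b ⟨x, hx⟩ ⟨y, hy⟩
    exact ⟨x + y, by rw [map_add, LinearMap.add_apply, hy, hx, add_smul]⟩
  algebraMap_mem' := fun r => ⟨r • 1, by rw [actE_smul, map_one]; simp⟩

theorem eigAlg_alg (ρ : Representation ℂ G V) (v : V) (hv : v ≠ 0) (c : ℂ) (hc : c ∈ eigAlg ρ v) :
    IsAlgebraic ℚ c := by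
  obtain ⟨x, hx⟩ := hc
  have hfin : Module.Finite ℚ (MonoidAlgebra ℚ G) := inferInstance
  obtain ⟨P, hP, hP0⟩ := IsIntegral.of_finite ℚ x
  refine IsIntegral.isAlgebraic ⟨P, hP, ?_⟩
  have := actE_eval (Rat.castHom ℂ) ρ x c v hx P
  have h0 : Polynomial.aeval x P = 0 := hP0
  rw [h0, map_zero, LinearMap.zero_apply] at this
  have h1 := (smul_eq_zero.1 this.symm).resolve_right hv
  rw [Subsingleton.elim (algebraMap ℚ ℂ) (Rat.castHom ℂ)]
  exact h1

/-- The corresponding field. -/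
noncomputable def eigField (ρ : Representation ℂ G V) (v : V) (hv : v ≠ 0) :
    IntermediateField ℚ ℂ :=
  (eigAlg ρ v).toIntermediateField fun x hx =>
    Subalgebra.inv_mem_of_algebraic (eigAlg ρ v) (x := ⟨x, hx⟩) (eigAlg_alg ρ v hv x hx)

theorem mem_eigField (ρ : Representation ℂ G V) (v : V) (hv : v ≠ 0) (c : ℂ) :
    c ∈ eigField ρ v hv ↔ ∃ x : MonoidAlgebra ℚ G, actE (Rat.castHom ℂ) ρ x v = c • v := Iff.rfl

/-- The rational form. -/
noncomputable def ratW (ρ : Representation ℂ G V) (v : V) (hv : v ≠ 0) :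
    Submodule (eigField ρ v hv) V where
  carrier := {w | ∃ x : MonoidAlgebra ℚ G, actE (Rat.castHom ℂ) ρ x v = w}
  add_mem' := by
    rintro a b ⟨x, hx⟩ ⟨y, hy⟩
    exact ⟨x + y, by rw [map_add, LinearMap.add_apply, hy, hx]⟩
  zero_mem' := ⟨0, by simp⟩
  smul_mem' := by
    rintro ⟨c, x, hx⟩ w ⟨y, hy⟩
    refine ⟨y * x, ?_⟩
    rw [map_mul, Module.End.mul_apply, hx, map_smul, hy]
    rfl

theorem mem_ratW (ρ : Representation ℂ G V) (v : V) (hv : v ≠ 0) (w : V) :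
    w ∈ ratW ρ v hv ↔ ∃ x : MonoidAlgebra ℚ G, actE (Rat.castHom ℂ) ρ x v = w := Iff.rfl

theorem ratW_stable (ρ : Representation ℂ G V) (v : V) (hv : v ≠ 0) (g : G) (w : V)
    (hw : w ∈ ratW ρ v hv) : ρ g w ∈ ratW ρ v hv := by
  obtain ⟨y, hy⟩ := hw
  refine ⟨MonoidAlgebra.single g 1 * y, ?_⟩
  rw [map_mul, Module.End.mul_apply, hy, actE_single, map_one, one_smul]

/-- The representation on the rational form. -/
noncomputable def ratRep (ρ : Representation ℂ G V) (v : V) (hv : v ≠ 0) :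
    Representation (eigField ρ v hv) G (ratW ρ v hv) where
  toFun g :=
    { toFun := fun w => ⟨ρ g w.1, ratW_stable ρ v hv g w.1 w.2⟩
      map_add' := fun a b => Subtype.ext (map_add (ρ g) _ _)
      map_smul' := fun c a => Subtype.ext (map_smul (ρ g) (c : ℂ) a.1) }
  map_one' := by ext w; simp
  map_mul' g h := by ext w; simp

theorem ratRep_apply (ρ : Representation ℂ G V) (v : V) (hv : v ≠ 0) (g : G) (w : ratW ρ v hv) :
    ((ratRep ρ v hv g w : ratW ρ v hv) : V) = ρ g w := rfl

theorem ratRep_actE (ρ : Representation ℂ G V) (v : V) (hv : v ≠ 0) (x : MonoidAlgebra ℚ G)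
    (w : ratW ρ v hv) :
    ((actE (Rat.castHom (eigField ρ v hv)) (ratRep ρ v hv) x w : ratW ρ v hv) : V) =
      actE (Rat.castHom ℂ) ρ x w := by
  induction x using MonoidAlgebra.induction with
  | zero => simp
  | single_add a b f _ _ ih =>
    simp only [map_add, actE_single, LinearMap.add_apply, LinearMap.smul_apply, Submodule.coe_add,
      ih]
    congr 1

theorem ratW_finite (ρ : Representation ℂ G V) (v : V) (hv : v ≠ 0) :
    FiniteDimensional (eigField ρ v hv) (ratW ρ v hv) := by
  classical
  have hv' : v ∈ ratW ρ v hv := ⟨1, by simp⟩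
  have key : ∀ x : MonoidAlgebra ℚ G, actE (Rat.castHom (eigField ρ v hv)) (ratRep ρ v hv) x ⟨v, hv'⟩
      ∈ Submodule.span (eigField ρ v hv)
        ((Finset.univ.image fun g => ratRep ρ v hv g ⟨v, hv'⟩ : Finset (ratW ρ v hv)) : Set _) := by
    intro x
    induction x using MonoidAlgebra.induction with
    | zero => simp
    | single_add a b f _ _ ih =>
      rw [map_add, actE_single, LinearMap.add_apply, LinearMap.smul_apply]
      refine Submodule.add_mem _ (Submodule.smul_mem _ _ (Submodule.subset_span ?_)) ih
      exact Finset.mem_coe.2 (Finset.mem_image_of_mem _ (Finset.mem_univ _))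
  refine ⟨Finset.univ.image fun g => ratRep ρ v hv g ⟨v, hv'⟩, ?_⟩
  rw [eq_top_iff]
  rintro ⟨w, x, rfl⟩ _
  have h1 : (⟨actE (Rat.castHom ℂ) ρ x v, x, rfl⟩ : ratW ρ v hv) =
    actE (Rat.castHom (eigField ρ v hv)) (ratRep ρ v hv) x ⟨v, hv'⟩ := Subtype.ext
      (ratRep_actE ρ v hv x ⟨v, hv'⟩).symm
  rw [h1]
  exact key x
end ratform

section ratform2
variable {G : Type} [Group G] [Fintype G] {V : Type} [AddCommGroup V] [Module ℂ V]
  [FiniteDimensional ℂ V]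

theorem ratRep_scalar (ρ : Representation ℂ G V) (v : V) (hv : v ≠ 0) (ε : MonoidAlgebra ℚ G)
    (hε : actE (Rat.castHom ℂ) ρ ε v = v)
    (eig : ∀ x : MonoidAlgebra ℚ G, ∃ c : ℂ, actE (Rat.castHom ℂ) ρ (ε * x) v = c • v)
    (φ : ratW ρ v hv →+ ratW ρ v hv) (hφ : ∀ g w, φ (ratRep ρ v hv g w) = ratRep ρ v hv g (φ w)) :
    ∃ c : eigField ρ v hv, ∀ w, φ w = c • w := by
  have hv' : v ∈ ratW ρ v hv := ⟨1, by simp⟩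
  have hQ : ∀ x w, φ (actE (Rat.castHom (eigField ρ v hv)) (ratRep ρ v hv) x w) =
      actE (Rat.castHom (eigField ρ v hv)) (ratRep ρ v hv) x (φ w) := by
    intro x w
    induction x using MonoidAlgebra.induction with
    | zero => simp
    | single_add a b f _ _ ih =>
      rw [map_add, actE_single, LinearMap.add_apply, LinearMap.smul_apply, map_add, ih,
        LinearMap.add_apply, LinearMap.smul_apply, ← hφ]
      congr 1
      exact map_ratCast_smul φ (eigField ρ v hv) (eigField ρ v hv) b _
  obtain ⟨y, hy⟩ := (φ ⟨v, hv'⟩).2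
  obtain ⟨c, hc⟩ := eig y
  have h0 : actE (Rat.castHom (eigField ρ v hv)) (ratRep ρ v hv) ε ⟨v, hv'⟩ = ⟨v, hv'⟩ :=
    Subtype.ext ((ratRep_actE ρ v hv ε ⟨v, hv'⟩).trans hε)
  have h1 : ((φ ⟨v, hv'⟩ : ratW ρ v hv) : V) = c • v := by
    rw [← hc, map_mul, Module.End.mul_apply, hy]
    conv_lhs => rw [← h0, hQ]
    exact ratRep_actE ρ v hv ε _
  have hcm : c ∈ eigField ρ v hv := ⟨y, hy.trans h1⟩
  refine ⟨⟨c, hcm⟩, ?_⟩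
  rintro ⟨w, x, rfl⟩
  have h2 : (⟨actE (Rat.castHom ℂ) ρ x v, x, rfl⟩ : ratW ρ v hv) =
    actE (Rat.castHom (eigField ρ v hv)) (ratRep ρ v hv) x ⟨v, hv'⟩ := Subtype.ext
      (ratRep_actE ρ v hv x ⟨v, hv'⟩).symm
  have h3 : φ ⟨v, hv'⟩ = (⟨c, hcm⟩ : eigField ρ v hv) • (⟨v, hv'⟩ : ratW ρ v hv) := Subtype.ext h1
  rw [h2, hQ, h3, map_smul]

theorem ratRep_trace (ρ : Representation ℂ G V)
    (hn : ∑ g : G, LinearMap.trace ℂ V (ρ g) * LinearMap.trace ℂ V (ρ g⁻¹) = Nat.card G)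
    (v : V) (hv : v ≠ 0)
    (H : ∀ f : Module.End (eigField ρ v hv) (ratW ρ v hv), ∃ x : MonoidAlgebra ℚ G,
      actE (Rat.castHom (eigField ρ v hv)) (ratRep ρ v hv) x = f) (g : G) :
    LinearMap.trace ℂ V (ρ g) = (LinearMap.trace _ _ (ratRep ρ v hv g) : eigField ρ v hv) := by
  classical
  have := ratW_finite ρ v hv
  have hv' : v ∈ ratW ρ v hv := ⟨1, by simp⟩
  let b := Module.finBasis (eigField ρ v hv) (ratW ρ v hv)
  have hmem : ∀ w : ratW ρ v hv, (w : V) ∈ Submodule.span ℂ (Set.range fun l => (b l : V)) := by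
    intro w
    rw [← b.sum_repr w, Submodule.coe_sum]
    refine Submodule.sum_mem _ fun l _ => ?_
    rw [Submodule.coe_smul, IntermediateField.smul_def]
    exact Submodule.smul_mem _ _ (Submodule.subset_span ⟨l, rfl⟩)
  have hli : LinearIndependent ℂ fun l => (b l : V) := by
    rw [Fintype.linearIndependent_iff]
    intro c hc i
    obtain ⟨x, hx⟩ := H ((b.coord i).smulRight ⟨v, hv'⟩)
    have h1 : ∀ l, actE (Rat.castHom ℂ) ρ x (b l) = (if l = i then v else 0) := by
      intro l
      rw [← ratRep_actE, hx, LinearMap.smulRight_apply, Module.Basis.coord_apply,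
        Module.Basis.repr_self, Finsupp.single_apply]
      split_ifs <;> simp
    have h2 := congrArg (actE (Rat.castHom ℂ) ρ x) hc
    simp only [map_sum, map_smul, h1, map_zero, smul_ite, smul_zero, Finset.sum_ite_eq',
      Finset.mem_univ, if_true] at h2
    exact (smul_eq_zero.1 h2).resolve_right hv
  have hsp : Submodule.span ℂ (Set.range fun l => (b l : V)) = ⊤ := by
    refine irr_top ρ hn _ ?_ v (hmem ⟨v, hv'⟩) hv
    intro g w hw
    induction hw using Submodule.span_induction with
    | mem x hx =>
      obtain ⟨l, rfl⟩ := hx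
      exact hmem (ratRep ρ v hv g (b l))
    | zero => simp
    | add x y _ _ h1 h2 => rw [map_add]; exact Submodule.add_mem _ h1 h2
    | smul a x _ h1 => rw [map_smul]; exact Submodule.smul_mem _ _ h1
  let B := Module.Basis.mk hli hsp.ge
  exact base_trace (algebraMap (eigField ρ v hv) ℂ) (ratW ρ v hv).subtype.toAddMonoidHom
    (fun a w => rfl) b B (fun l => Module.Basis.mk_apply _ _ _) (ρ g) (ratRep ρ v hv g)
    (fun w => rfl)

theorem eigField_eq (ρ : Representation ℂ G V)
    (hn : ∑ g : G, LinearMap.trace ℂ V (ρ g) * LinearMap.trace ℂ V (ρ g⁻¹) = Nat.card G)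
    (v : V) (hv : v ≠ 0)
    (H : ∀ f : Module.End (eigField ρ v hv) (ratW ρ v hv), ∃ x : MonoidAlgebra ℚ G,
      actE (Rat.castHom (eigField ρ v hv)) (ratRep ρ v hv) x = f) :
    charField (fun g => LinearMap.trace ℂ V (ρ g)) = eigField ρ v hv := by
  classical
  have := ratW_finite ρ v hv
  have htr := ratRep_trace ρ hn v hv H
  apply le_antisymm
  · refine IntermediateField.adjoin_le_iff.2 ?_
    rintro _ ⟨g, rfl⟩
    simp only [htr]
    exact (LinearMap.trace _ _ (ratRep ρ v hv g) : eigField ρ v hv).2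
  · intro c hc
    have hv' : v ∈ ratW ρ v hv := ⟨1, by simp⟩
    obtain ⟨f, hf, -⟩ := Submodule.exists_le_ker_of_notMem
      (p := (⊥ : Submodule (eigField ρ v hv) (ratW ρ v hv))) (v := ⟨v, hv'⟩)
      (by intro h; exact hv (congrArg Subtype.val ((Submodule.mem_bot _).1 h)))
    obtain ⟨x, hx⟩ := H (f.smulRight (((⟨c, hc⟩ : eigField ρ v hv) * (f ⟨v, hv'⟩)⁻¹) • ⟨v, hv'⟩))
    have h1 := trace_actE (Rat.castHom (eigField ρ v hv)) (algebraMap (eigField ρ v hv) ℂ)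
      (ratRep ρ v hv) ρ (fun g => (htr g).symm) x
    rw [hx, LinearMap.trace_smulRight, map_smul, smul_eq_mul, inv_mul_cancel_right₀ hf] at h1
    have h2 : ∀ y : MonoidAlgebra ℚ G, LinearMap.trace ℂ V
        (actE ((algebraMap (eigField ρ v hv) ℂ).comp (Rat.castHom (eigField ρ v hv))) ρ y) ∈
        charField (fun g => LinearMap.trace ℂ V (ρ g)) := by
      intro y
      induction y using MonoidAlgebra.induction with
      | zero => simp
      | single_add a b f _ _ ih =>
        rw [map_add, map_add, actE_single, map_smul, smul_eq_mul]
        refine add_mem (mul_mem ?_ (IntermediateField.subset_adjoin ℚ _ ⟨a, rfl⟩)) ih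
        rw [RingHom.comp_apply, eq_ratCast, map_ratCast]
        exact IntermediateField.algebraMap_mem _ b
    have h3 := h2 x
    rw [← h1] at h3
    exact h3

theorem schur_one (χ : G → ℂ) (F : IntermediateField ℚ ℂ) (hF : charField χ = F)
    (W : Type) [AddCommGroup W] [Module F W] [FiniteDimensional F W] (σ : Representation F G W)
    (hσ : ∀ g, χ g = (LinearMap.trace F W (σ g) : F)) : schurIndex χ = 1 := by
  subst hF
  let E := (Module.finBasis (charField χ) W).equivFun
  let τ : Representation (charField χ) G (Fin (Module.finrank (charField χ) W) → charField χ) :=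
    { toFun := fun g => E.conj (σ g)
      map_one' := by rw [map_one]; exact E.conj_id
      map_mul' := fun a b => by rw [map_mul]; exact E.conj_comp _ _ }
  have h1 : 1 ∈ {m : ℕ | 0 < m ∧
    ∃ (n : ℕ) (ρ : Representation (charField χ) G (Fin n → charField χ)),
      ∀ g : G, algebraMap (charField χ) ℂ
          (LinearMap.trace (charField χ) (Fin n → charField χ) (ρ g)) = (m : ℂ) * χ g} := by
    refine ⟨one_pos, _, τ, fun g => ?_⟩
    rw [Nat.cast_one, one_mul, hσ]
    exact congrArg _ (LinearMap.trace_conj' (σ g) E)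
  apply le_antisymm
  · exact Nat.sInf_le h1
  · exact (Nat.sInf_mem ⟨1, h1⟩).1
end ratform2

/-! ### The forward direction -/
section fwd
variable {O : Type} [CommRing O] [IsDomain O] [IsPrincipalIdealRing O] [IsLocalRing O] [CharZero O]
  {G : Type} [Group G] [Fintype G] {V : Type} [AddCommGroup V] [Module ℂ V]

theorem full_act (hcard : IsUnit (Nat.card G : O)) {p : ℕ} (hp : p.Prime)
    (hloc : ∀ x : O, ∃ s a : ℤ, ¬ (p : ℤ) ∣ s ∧ (s : O) * x = a)
    (hq : IsLocalRing.maximalIdeal O = Ideal.span {(p : O)})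
    (c0 : O →+* ℂ) (hc0 : Function.Injective c0) (ρ : Representation ℂ G V) (v : V) (hv : v ≠ 0)
    {e : MonoidAlgebra O G} (he : PrimIdem e) (hev : actE c0 ρ e v = v)
    (D : ∀ x y, e * x = x → x * e = x → e * y = y → redHom O G (x * y) = 0 →
      redHom O G x = 0 ∨ redHom O G y = 0)
    (c : ℂ) (hc : c ∈ eigField ρ v hv) (hci : IsIntegral ℤ c) :
    ∃ x, e * x = x ∧ x * e = x ∧ actE c0 ρ x v = c • v := by
  obtain ⟨x0, hx0⟩ := hc
  obtain ⟨m, hm, y, hy⟩ := clear_den O x0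
  obtain ⟨k, s, hs, hms⟩ := Nat.exists_eq_pow_mul_and_not_dvd hm p hp.ne_one
  have D' : ∀ x, e * x = x → x * e = x → ∀ d : ℕ, redHom O G (x ^ (d + 1)) = 0 →
      redHom O G x = 0 := by
    intro x h1 h2 d
    induction d with
    | zero => intro h; simpa using h
    | succ d ih =>
      intro h
      rw [pow_succ'] at h
      rcases D x (x ^ (d + 1)) h1 h2 (by rw [pow_succ', ← mul_assoc, h1]) h with h | h
      · exact h
      · exact ih h
  have key : ∀ k : ℕ, ∀ x, e * x = x → x * e = x →
      actE c0 ρ x v = ((p : ℂ) ^ k * s * c) • v →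
      ∃ x, e * x = x ∧ x * e = x ∧ actE c0 ρ x v = c • v := by
    intro k
    induction k with
    | zero =>
      intro x h1 h2 h
      obtain ⟨u, hu⟩ := isUnit_int hp hloc hq (s : ℤ) (by exact_mod_cast hs)
      refine ⟨(↑u⁻¹ : O) • x, by rw [mul_smul_comm, h1], by rw [smul_mul_assoc, h2], ?_⟩
      rw [actE_smul, LinearMap.smul_apply, h, smul_smul, pow_zero, one_mul, ← mul_assoc]
      have h3 : c0 (↑u⁻¹ : O) * (s : ℂ) = 1 := by
        have : (s : ℂ) = c0 (u : O) := by rw [hu]; simp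
        rw [this, ← map_mul, Units.inv_mul, map_one]
      rw [h3, one_mul]
    | succ k ih =>
      intro x h1 h2 h
      obtain ⟨d, hd⟩ := scaled_root' hcard he c0 hc0 ρ v hv hev hq x h1 h2 ((p : ℂ) ^ k * s * c)
        ((((isIntegral_natCast p).pow k).mul (isIntegral_natCast s)).mul hci) 1 isUnit_one
        ((p : ℂ) ^ (k + 1) * s * c) (by rw [map_one, map_natCast]; ring) h
      obtain ⟨y, hy1, hy2, hy3⟩ := corner_div he.1 hq x h1 h2 (D' x h1 h2 d hd)
      refine ih y hy1 hy2 ?_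
      rw [hy3, actE_smul, LinearMap.smul_apply, map_natCast] at h
      have hp0 : (p : ℂ) ≠ 0 := by exact_mod_cast hp.ne_zero
      apply (smul_right_injective V hp0)
      simp only [h, smul_smul]
      congr 1; ring
  refine key k (e * y * e) (by rw [← mul_assoc, ← mul_assoc, he.1]) (by rw [mul_assoc, he.1]) ?_
  rw [map_mul, map_mul, Module.End.mul_apply, Module.End.mul_apply, hev, hy ℂ V c0 ρ,
    LinearMap.smul_apply, hx0, smul_smul, map_smul, hev, hms]
  push_cast; rfl

theorem prime_core (hcard : IsUnit (Nat.card G : O)) {p : ℕ} (hp : p.Prime)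
    (hloc : ∀ x : O, ∃ s a : ℤ, ¬ (p : ℤ) ∣ s ∧ (s : O) * x = a)
    (hq : IsLocalRing.maximalIdeal O = Ideal.span {(p : O)}) (j : O →+* ℚ)
    (hj : Function.Injective j) (ρ : Representation ℂ G V) (v : V) (hv : v ≠ 0)
    {e : MonoidAlgebra O G} (he : PrimIdem e) (hev : actE ((Rat.castHom ℂ).comp j) ρ e v = v)
    (D : ∀ x y, e * x = x → x * e = x → e * y = y → redHom O G (x * y) = 0 →
      redHom O G x = 0 ∨ redHom O G y = 0)
    (scal : ∀ x, e * x = x → x * e = x → ∃ t : ℂ, actE ((Rat.castHom ℂ).comp j) ρ x v = t • v) :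
    Prime (p : NumberField.RingOfIntegers (eigField ρ v hv)) := by
  set c0 := (Rat.castHom ℂ).comp j with hc0def
  have hc0 : Function.Injective c0 := (Rat.castHom ℂ).injective.comp hj
  have hp0 : (p : ℂ) ≠ 0 := by exact_mod_cast hp.ne_zero
  have full : ∀ a : NumberField.RingOfIntegers (eigField ρ v hv),
      ∃ x, e * x = x ∧ x * e = x ∧ actE c0 ρ x v = ((a : eigField ρ v hv) : ℂ) • v := by
    intro a
    refine full_act hcard hp hloc hq c0 hc0 ρ v hv he hev D _ (a : eigField ρ v hv).2 ?_
    exact (NumberField.RingOfIntegers.isIntegral_coe a).map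
      ((eigField ρ v hv).val.restrictScalars ℤ)
  have hred : ∀ x : MonoidAlgebra O G, redHom O G ((p : O) • x) = 0 := fun x =>
    (redHom_eq_zero hq _).2 ⟨x, rfl⟩
  have dv : ∀ (a : NumberField.RingOfIntegers (eigField ρ v hv)) (x : MonoidAlgebra O G),
      e * x = x → x * e = x → actE c0 ρ x v = ((a : eigField ρ v hv) : ℂ) • v →
      redHom O G x = 0 → (p : NumberField.RingOfIntegers (eigField ρ v hv)) ∣ a := by
    intro a x h1 h2 h3 h4
    obtain ⟨y, hy1, hy2, hy3⟩ := corner_div he.1 hq x h1 h2 h4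
    obtain ⟨t, ht⟩ := scal y hy1 hy2
    have hat : ((a : eigField ρ v hv) : ℂ) = p * t := by
      rw [hy3, actE_smul, LinearMap.smul_apply, map_natCast, ht, smul_smul] at h3
      exact (smul_left_injective ℂ hv h3).symm
    have htm : t ∈ eigField ρ v hv := ⟨MonoidAlgebra.mapRingHom G j y, by rw [actE_map]; exact ht⟩
    obtain ⟨s, hs, hst⟩ := intg hp hloc c0 t (integral_act c0 ρ v hv y t ht)
    have hpt : IsIntegral ℤ ((p : ℂ) * t) := by
      rw [← hat]
      exact (NumberField.RingOfIntegers.isIntegral_coe a).map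
        ((eigField ρ v hv).val.restrictScalars ℤ)
    have hcop : IsCoprime (p : ℤ) s :=
      (Prime.coprime_iff_not_dvd (Nat.prime_iff_prime_int.1 hp)).2 hs
    obtain ⟨α, β, hab⟩ := hcop
    have hti : IsIntegral ℤ t := by
      have : t = α * (p * t) + β * (s * t) := by
        have h : ((α * p + β * s : ℤ) : ℂ) = 1 := by rw [hab]; simp
        push_cast at h
        linear_combination (-t) * h
      rw [this]
      exact ((isIntegral_intCast α).mul hpt).add ((isIntegral_intCast β).mul hst)
    have hti' : IsIntegral ℤ (⟨t, htm⟩ : eigField ρ v hv) := by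
      rw [← isIntegral_algebraMap_iff (algebraMap (eigField ρ v hv) ℂ).injective]
      exact hti
    obtain ⟨T, hT⟩ : ∃ T : NumberField.RingOfIntegers (eigField ρ v hv),
        (T : eigField ρ v hv) = ⟨t, htm⟩ := ⟨⟨⟨t, htm⟩, hti'⟩, rfl⟩
    refine ⟨T, ?_⟩
    apply NumberField.RingOfIntegers.ext
    apply Subtype.ext
    rw [hat]
    simp [hT]
  refine ⟨by exact_mod_cast hp.ne_zero, ?_, ?_⟩
  · intro hu
    obtain ⟨u, hu⟩ := hu.exists_right_inv
    obtain ⟨x, h1, h2, h3⟩ := full u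
    have hu' : (p : ℂ) * ((u : eigField ρ v hv) : ℂ) = 1 := by
      have := congrArg (fun z : NumberField.RingOfIntegers (eigField ρ v hv) =>
        ((z : eigField ρ v hv) : ℂ)) hu
      simpa using this
    have h4 := prim_act hcard he c0 hc0 ρ v hv hev ((p : O) • x - e)
      (by rw [sub_mul, smul_mul_assoc, h2, he.1])
      (by rw [map_sub, actE_smul, LinearMap.sub_apply, LinearMap.smul_apply, h3, hev, smul_smul,
        map_natCast, hu', one_smul, sub_self])
    refine he.2.1 (redHom_idem_zero e he.1 ?_)
    rw [← sub_eq_zero.1 h4]; exact hred x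
  · rintro a b ⟨d, hd⟩
    obtain ⟨x, h1, h2, h3⟩ := full a
    obtain ⟨x', h1', h2', h3'⟩ := full b
    obtain ⟨y, hy1, hy2, hy3⟩ := full d
    have hd' : ((a : eigField ρ v hv) : ℂ) * ((b : eigField ρ v hv) : ℂ) =
        (p : ℂ) * ((d : eigField ρ v hv) : ℂ) := by
      have := congrArg (fun z : NumberField.RingOfIntegers (eigField ρ v hv) =>
        ((z : eigField ρ v hv) : ℂ)) hd
      simpa using this
    have h4 := prim_act hcard he c0 hc0 ρ v hv hev (x * x' - (p : O) • y)
      (by rw [sub_mul, smul_mul_assoc, hy2, mul_assoc, h2'])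
      (by rw [map_sub, actE_smul, LinearMap.sub_apply, LinearMap.smul_apply, map_mul,
        Module.End.mul_apply, h3', map_smul, h3, hy3, smul_smul, smul_smul,
        map_natCast, mul_comm, hd', sub_self])
    have h5 : redHom O G (x * x') = 0 := by rw [sub_eq_zero.1 h4]; exact hred y
    rcases D x x' h1 h2 h1' h5 with h | h
    · exact Or.inl (dv a x h1 h2 h3 h)
    · exact Or.inr (dv b x' h1' h2' h3' h)

theorem exists_eigvec [Finite (IsLocalRing.ResidueField O)] [FiniteDimensional ℂ V]
    (hcard : IsUnit (Nat.card G : O)) {q : O}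
    (hq : IsLocalRing.maximalIdeal O = Ideal.span {q})
    (hl : ∀ x : MonoidAlgebra (IsLocalRing.ResidueField O) G, x * x = x →
        ∃ f : MonoidAlgebra O G, f * f = f ∧ redHom O G f = x)
    (c0 : O →+* ℂ) (ρ : Representation ℂ G V) (hV : Nontrivial V) :
    ∃ e, PrimIdem e ∧ (∀ x y, e * x = x → x * e = x → e * y = y → redHom O G (x * y) = 0 →
      redHom O G x = 0 ∨ redHom O G y = 0) ∧ ∃ v, v ≠ 0 ∧ actE c0 ρ e v = v ∧
      ∀ x, e * x = x → x * e = x → ∃ t : ℂ, actE c0 ρ x v = t • v := by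
  obtain ⟨e, he, hne, -, -⟩ := exists_primIdem (R := MonoidAlgebra O G)
    (fun e => actE c0 ρ e ≠ 0) (by simp) (by
      intro e f _ _ _ _ h
      by_contra! hcon
      apply h
      rw [← sub_add_cancel e f, map_add, hcon.1, hcon.2, add_zero]) 1 (mul_one 1)
      (by rw [map_one]; exact one_ne_zero)
  obtain ⟨D, a, ha1, ha2, ha⟩ := corner_span hcard he hq hl
  refine ⟨e, he, D, ?_⟩
  let S := LinearMap.range (actE c0 ρ e)
  have hS : ∀ w ∈ S, actE c0 ρ e w = w := by
    rintro _ ⟨w, rfl⟩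
    rw [← Module.End.mul_apply, ← map_mul, he.1]
  have hSa : ∀ w ∈ S, actE c0 ρ a w ∈ S := by
    intro w _
    refine ⟨actE c0 ρ a w, ?_⟩
    rw [← Module.End.mul_apply, ← map_mul, ha1]
  have hSn : Nontrivial S := by
    rw [Submodule.nontrivial_iff_ne_bot]
    intro h
    exact hne (LinearMap.range_eq_bot.1 h)
  obtain ⟨μ, hμ⟩ := Module.End.exists_eigenvalue ((actE c0 ρ a).restrict hSa)
  obtain ⟨⟨v, hvS⟩, hv⟩ := hμ.exists_hasEigenvector
  have hv0 : v ≠ 0 := fun h => hv.2 (Subtype.ext h)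
  have hav : actE c0 ρ a v = μ • v := congrArg Subtype.val hv.apply_eq_smul
  refine ⟨v, hv0, hS v hvS, ?_⟩
  intro x h1 h2
  have hx := ha x h1 h2
  have hpow : ∀ n : ℕ, actE c0 ρ (a ^ n) v = μ ^ n • v := by
    intro n
    induction n with
    | zero => simp
    | succ n ih => rw [pow_succ, map_mul, Module.End.mul_apply, hav, map_smul, ih, smul_smul,
        pow_succ, mul_comm]
  clear h1 h2
  induction hx using Submodule.span_induction with
  | mem x hx =>
    obtain ⟨n, rfl⟩ := hx
    exact ⟨μ ^ n, by rw [map_mul, Module.End.mul_apply, hpow, map_smul, hS v hvS]⟩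
  | zero => exact ⟨0, by simp⟩
  | add x y _ _ h1 h2 =>
    obtain ⟨t, ht⟩ := h1
    obtain ⟨u, hu⟩ := h2
    exact ⟨t + u, by rw [map_add, LinearMap.add_apply, ht, hu, add_smul]⟩
  | smul r x _ h1 =>
    obtain ⟨t, ht⟩ := h1
    exact ⟨c0 r * t, by rw [actE_smul, LinearMap.smul_apply, ht, smul_smul]⟩

theorem prime_transfer (F K : IntermediateField ℚ ℂ) (h : F = K) (p : ℕ)
    (hp : Prime (p : NumberField.RingOfIntegers K)) : Prime (p : NumberField.RingOfIntegers F) := by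
  subst h; exact hp

open CategoryTheory in
theorem fwd_dir [Finite (IsLocalRing.ResidueField O)]
    (hcard : IsUnit (Nat.card G : O)) {p : ℕ} (hp : p.Prime)
    (hloc : ∀ x : O, ∃ s a : ℤ, ¬ (p : ℤ) ∣ s ∧ (s : O) * x = a)
    (hq : IsLocalRing.maximalIdeal O = Ideal.span {(p : O)})
    (j : O →+* ℚ) (hj : Function.Injective j) (h : IsSemiperfectRing (MonoidAlgebra O G))
    (V : FDRep ℂ G) (hV : Simple V) : schurIndex V.character = 1 ∧
        Prime (p : NumberField.RingOfIntegers (charField V.character)) := by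
  rw [isSemiperfect_iff hcard] at h
  have hn := (FDRep.simple_iff_char_is_norm_one V).1 hV
  have hn' : ∑ g : G, LinearMap.trace ℂ V (V.ρ g) * LinearMap.trace ℂ V (V.ρ g⁻¹) = Nat.card G := hn
  obtain ⟨e, he, D, v, hv, hev, scal⟩ := exists_eigvec hcard hq h ((Rat.castHom ℂ).comp j) V.ρ
    (lin_scalar V.ρ hn').1
  have hε : actE (Rat.castHom ℂ) V.ρ (MonoidAlgebra.mapRingHom G j e) v = v := by
    rw [actE_map]; exact hev
  have eig : ∀ x : MonoidAlgebra ℚ G, ∃ c : ℂ,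
      actE (Rat.castHom ℂ) V.ρ (MonoidAlgebra.mapRingHom G j e * x) v = c • v := by
    intro x
    obtain ⟨m, hm, y, hy⟩ := clear_den O x
    obtain ⟨t, ht⟩ := scal (e * y * e) (by rw [← mul_assoc, ← mul_assoc, he.1])
      (by rw [mul_assoc, he.1])
    refine ⟨(m : ℂ)⁻¹ * t, ?_⟩
    have hm0 : (m : ℂ) ≠ 0 := by exact_mod_cast hm
    rw [map_mul, map_mul, Module.End.mul_apply, Module.End.mul_apply, hev,
      hy ℂ V ((Rat.castHom ℂ).comp j) V.ρ, LinearMap.smul_apply, map_smul] at ht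
    rw [map_mul, Module.End.mul_apply, actE_map, mul_smul, ← ht, smul_smul, inv_mul_cancel₀ hm0,
      one_smul]
  have hfin := ratW_finite V.ρ v hv
  have H := dense (ratRep V.ρ v hv) (ratRep_scalar V.ρ v hv _ hε eig)
  have hF : charField V.character = eigField V.ρ v hv := eigField_eq V.ρ hn' v hv H
  refine ⟨schur_one V.character _ hF (ratW V.ρ v hv) (ratRep V.ρ v hv)
    (ratRep_trace V.ρ hn' v hv H), ?_⟩
  exact prime_transfer _ _ hF p (prime_core hcard hp hloc hq j hj V.ρ v hv he hev D scal)
end fwd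

theorem main_iff {O : Type} [CommRing O] [IsDomain O] [IsPrincipalIdealRing O] [IsLocalRing O]
    [CharZero O] {G : Type} [Group G] [Fintype G] [Finite (IsLocalRing.ResidueField O)]
    (hcard : IsUnit (Nat.card G : O)) {p : ℕ} (hp : p.Prime)
    (hloc : ∀ x : O, ∃ s a : ℤ, ¬ (p : ℤ) ∣ s ∧ (s : O) * x = a)
    (hq : IsLocalRing.maximalIdeal O = Ideal.span {(p : O)})
    (j : O →+* ℚ) (hj : Function.Injective j) :
    IsSemiperfectRing (MonoidAlgebra O G) ↔ ∀ V : FDRep ℂ G, CategoryTheory.Simple V →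
        schurIndex V.character = 1 ∧
        Prime (p : NumberField.RingOfIntegers (charField V.character)) :=
  ⟨fun h V hV => fwd_dir hcard hp hloc hq j hj h V hV, fun h => back_dir hcard hp hloc hq j hj h⟩

section zloc
variable (p : ℕ) [hp : Fact p.Prime]

theorem zloc_hloc (x : ZLoc p) : ∃ s a : ℤ, ¬ (p : ℤ) ∣ s ∧ (s : ZLoc p) * x = a := by
  obtain ⟨⟨a, s⟩, h⟩ := IsLocalization.surj (Ideal.span {(p : ℤ)}).primeCompl x
  refine ⟨s.1, a, fun hd => s.2 (Ideal.mem_span_singleton.2 hd), ?_⟩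
  rw [mul_comm]
  simpa using h

theorem zloc_le : (Ideal.span {(p : ℤ)}).primeCompl ≤ nonZeroDivisors ℤ :=
  Ideal.primeCompl_le_nonZeroDivisors _

instance zloc_domain : IsDomain (ZLoc p) := IsLocalization.isDomain_localization (zloc_le p)

theorem zloc_pid : IsPrincipalIdealRing (ZLoc p) := by
  have hne : Ideal.span {(p : ℤ)} ≠ ⊥ := by
    rw [Ne, Ideal.span_singleton_eq_bot]
    exact_mod_cast hp.out.ne_zero
  have := IsLocalization.AtPrime.isDiscreteValuationRing_of_dedekind_domain ℤ hne (ZLoc p)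
  infer_instance

theorem zloc_cz : CharZero (ZLoc p) :=
  charZero_of_injective_algebraMap (IsLocalization.injective (ZLoc p) (zloc_le p))

theorem zloc_max : IsLocalRing.maximalIdeal (ZLoc p) = Ideal.span {(p : ZLoc p)} := by
  rw [← Localization.AtPrime.map_eq_maximalIdeal, Ideal.map_span, Set.image_singleton]
  simp

theorem zloc_fin : Finite (IsLocalRing.ResidueField (ZLoc p)) := by
  have hp0 : ((p : ℤ) : IsLocalRing.ResidueField (ZLoc p)) = 0 := by
    have : IsLocalRing.residue (ZLoc p) (p : ZLoc p) = 0 := by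
      rw [IsLocalRing.residue_eq_zero_iff, zloc_max]
      exact Ideal.mem_span_singleton_self _
    simpa using this
  have hne : ∀ s : ℤ, ¬ (p : ℤ) ∣ s → ((s : ℤ) : IsLocalRing.ResidueField (ZLoc p)) ≠ 0 := by
    intro s hs h
    obtain ⟨a, b, hab⟩ := (Prime.coprime_iff_not_dvd (Nat.prime_iff_prime_int.1 hp.out)).2 hs
    have := congrArg (Int.cast : ℤ → IsLocalRing.ResidueField (ZLoc p)) hab
    rw [Int.cast_add, Int.cast_mul, Int.cast_mul, hp0, h] at this
    simp at this
  have hfin : Finite (Set.range (Int.cast : ℤ → IsLocalRing.ResidueField (ZLoc p))) := by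
    apply Set.Finite.subset ((Set.finite_Icc (0 : ℤ) p).image
      (Int.cast : ℤ → IsLocalRing.ResidueField (ZLoc p)))
    rintro _ ⟨a, rfl⟩
    have hpos : (0 : ℤ) < p := by exact_mod_cast hp.out.pos
    refine ⟨a % p, ⟨Int.emod_nonneg _ hpos.ne', (Int.emod_lt_of_pos _ hpos).le⟩, ?_⟩
    conv_rhs => rw [← Int.emod_add_mul_ediv a p, Int.cast_add, Int.cast_mul, hp0, zero_mul, add_zero]
  refine Finite.of_surjective (fun z : Set.range (Int.cast : ℤ → IsLocalRing.ResidueField (ZLoc p)) ×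
    Set.range (Int.cast : ℤ → IsLocalRing.ResidueField (ZLoc p)) => z.1.1 / z.2.1) ?_
  intro y
  obtain ⟨x, rfl⟩ := IsLocalRing.residue_surjective y
  obtain ⟨s, a, hs, h⟩ := zloc_hloc p x
  refine ⟨⟨⟨_, a, rfl⟩, ⟨_, s, rfl⟩⟩, ?_⟩
  simp only
  rw [div_eq_iff (hne s hs)]
  have := congrArg (IsLocalRing.residue (ZLoc p)) h
  rw [map_mul, map_intCast, map_intCast] at this
  rw [← this, mul_comm]

theorem zloc_j : ∃ j : ZLoc p →+* ℚ, Function.Injective j := by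
  have h : ∀ y : (Ideal.span {(p : ℤ)}).primeCompl, IsUnit (Int.castRingHom ℚ y) := by
    intro y
    refine IsUnit.mk0 _ ?_
    have : (y : ℤ) ≠ 0 := nonZeroDivisors.ne_zero (zloc_le p y.2)
    simpa using this
  refine ⟨IsLocalization.lift h, ?_⟩
  have := zloc_cz p
  rw [injective_iff_map_eq_zero]
  intro x hx
  obtain ⟨s, a, hs, hh⟩ := zloc_hloc p x
  have h1 := congrArg (IsLocalization.lift h) hh
  rw [map_mul, hx, mul_zero, map_intCast] at h1
  have ha : a = 0 := by exact_mod_cast h1.symm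
  rw [ha, Int.cast_zero] at hh
  have hs0 : (s : ZLoc p) ≠ 0 := by
    rw [Int.cast_ne_zero]; rintro rfl; exact hs (dvd_zero _)
  exact (mul_eq_zero.1 hh).resolve_left hs0
end zloc

open CategoryTheory in
/-- **Main Theorem.** Suppose the prime `p` does not divide `|G|`. Then `ℤ_(p)G` is
semiperfect if and only if (i) every complex irreducible character `χ` of `G` has Schur
index `1`, and (ii) `p` is inert in the field of character values `ℚ(χ)` of every complex
irreducible character `χ`, i.e. `p` remains a prime element of the ring of integers of
`ℚ(χ)`. -/
theorem isSemiperfectRing_zloc_monoidAlgebra_iff_schurIndex_and_inert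
    (G : Type) [Group G] [Fintype G] (p : ℕ) [Fact p.Prime]
    (hpG : ¬ p ∣ Fintype.card G) :
    IsSemiperfectRing (MonoidAlgebra (ZLoc p) G) ↔
      ∀ V : FDRep ℂ G, Simple V →
        schurIndex V.character = 1 ∧
        Prime (p : NumberField.RingOfIntegers (charField V.character)) := by
  have hp : p.Prime := Fact.out
  have := zloc_pid p
  have := zloc_cz p
  have := zloc_fin p
  obtain ⟨j, hj⟩ := zloc_j p
  refine main_iff ?_ hp (zloc_hloc p) (zloc_max p) j hj
  have h := isUnit_int hp (zloc_hloc p) (zloc_max p) (Nat.card G : ℤ) (by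
    rw [Nat.card_eq_fintype_card]; exact_mod_cast hpG)
  simpa using h
end

section
/- Let p be a prime and n a positive integer with p ∤ n, and let Cₙ be the cyclic group of order n. Then ℤ_(p)Cₙ is semiperfect if and only if for each divisor d of n the d-th cyclotomic polynomial Φ_d(z) remains irreducible as a polynomial over 𝔽_p. -/
open Polynomial in
theorem aux_sep {A : Type*} [CommRing A] {n : ℕ} (hn : IsUnit (n : A)) :
    (X ^ n - 1 : A[X]).Separable := by
  simpa using separable_X_pow_sub_C_unit (1 : Aˣ) hn

open Polynomial in
theorem aux_dvd (A : Type*) [CommRing A] {d n : ℕ} (hd : d ∣ n) :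
    cyclotomic d A ∣ X ^ n - 1 := by
  obtain ⟨m, rfl⟩ := hd
  refine (cyclotomic.dvd_X_pow_sub_one d A).trans ?_
  simpa [pow_mul] using sub_dvd_pow_sub_pow (X ^ d : A[X]) 1 m

theorem aux_semiperfect {R S : Type*} [CommRing R] [CommRing S] [IsSemisimpleRing S]
    (π : R →+* S) (hs : Function.Surjective π) (hk : RingHom.ker π ≤ Ring.jacobson R) :
    IsSemiperfectRing R ↔ ∀ y : S, IsIdempotentElem y → ∃ e : R, IsIdempotentElem e ∧ π e = y := by
  have hmem : ∀ x : R, x ∈ ringJacobson R ↔ π x = 0 := by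
    intro x
    have h1 : x ∈ ringJacobson R ↔ x ∈ Ring.jacobson R := by
      rw [ringJacobson, ← TwoSidedIdeal.mem_asIdeal, TwoSidedIdeal.asIdeal_jacobson,
        TwoSidedIdeal.bot_asIdeal, Ring.jacobson_eq_sInf_isMaximal, Ideal.jacobson]
      simp
    rw [h1]
    refine ⟨fun h => ?_, fun h => hk h⟩
    have : RingHomSurjective π := ⟨hs⟩
    have := Ring.le_comap_jacobson π h
    rw [IsSemisimpleRing.jacobson_eq_bot] at this
    simpa using this
  have hcon : (ringJacobson R).ringCon = RingCon.ker π := by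
    ext x y
    rw [TwoSidedIdeal.rel_iff, hmem, RingCon.ker_apply, map_sub, sub_eq_zero]
  let q := (ringJacobson R).ringCon.mk'
  have hq : Function.Surjective q := RingCon.mk'_surjective _
  have hqk : RingHom.ker q = RingHom.ker π := by
    ext x
    rw [RingHom.mem_ker, RingHom.mem_ker, ← hmem, TwoSidedIdeal.mem_iff]
    exact RingCon.eq _
  let e : (ringJacobson R).ringCon.Quotient ≃+* S :=
    (RingHom.quotientKerEquivOfSurjective hq).symm.trans
      ((Ideal.quotEquivOfEq hqk).trans (RingHom.quotientKerEquivOfSurjective hs))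
  have he : ∀ x, e (q x) = π x := by
    intro x
    have : (RingHom.quotientKerEquivOfSurjective hq).symm (q x) = Ideal.Quotient.mk _ x := by
      rw [RingEquiv.symm_apply_eq]; rfl
    simp only [e, RingEquiv.trans_apply, this]
    rfl
  unfold IsSemiperfectRing
  rw [RingEquiv.isSemisimpleRing_iff e]
  refine ⟨fun h y hy => ?_, fun h => ⟨inferInstance, fun x hx => ?_⟩⟩
  · obtain ⟨r, hr, hr'⟩ := h.2 (e.symm y) (hy.map e.symm)
    refine ⟨r, hr, ?_⟩
    rw [← he]
    change e ((ringJacobson R).ringCon.mk' r) = y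
    rw [hr']; simp
  · obtain ⟨r, hr, hr'⟩ := h (e x) (hx.map e)
    refine ⟨r, hr, e.injective ?_⟩
    rw [← hr', ← he]

theorem aux_ker {A F G : Type*} [CommRing A] [IsLocalRing A] [Field F] [CommGroup G] [Finite G]
    (φ : A →+* F) :
    RingHom.ker (MonoidAlgebra.mapRingHom G φ) ≤ Ring.jacobson (MonoidAlgebra A G) := by
  intro x hx
  rw [Ring.jacobson_eq_sInf_isMaximal, Submodule.mem_sInf]
  intro (M : Ideal (MonoidAlgebra A G)) hM
  replace hM : Ideal.IsMaximal M := hM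
  have : Module.Finite A (MonoidAlgebra A G) := inferInstance
  have h1 := Ideal.isMaximal_comap_of_isIntegral_of_isMaximal (R := A) M
  have h2 := IsLocalRing.eq_maximalIdeal h1
  have h3 : ∀ a : A, φ a = 0 → algebraMap A (MonoidAlgebra A G) a ∈ M := by
    intro a ha
    rw [← Ideal.mem_comap, h2, IsLocalRing.mem_maximalIdeal]
    intro hu
    exact (hu.map φ).ne_zero ha
  have h4 : ∀ g, φ (x.coeff g) = 0 := by
    intro g
    have := congrArg (fun y => MonoidAlgebra.coeff y g) (RingHom.mem_ker.mp hx)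
    simpa using this
  rw [← MonoidAlgebra.sum_coeff_single x]
  refine M.sum_mem fun g _ => ?_
  have : MonoidAlgebra.single g (x.coeff g) =
     algebraMap A (MonoidAlgebra A G) (x.coeff g) * MonoidAlgebra.single g 1 := by
    simp
  rw [this]
  exact M.mul_mem_right _ (h3 _ (h4 g))

open Polynomial

/-- polynomials to group algebra -/
noncomputable def auxPsi (A : Type*) [CommRing A] (n : ℕ) :
    A[X] →ₐ[A] MonoidAlgebra A (Multiplicative (ZMod n)) :=
  aeval (MonoidAlgebra.of A _ (Multiplicative.ofAdd (1 : ZMod n)))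

theorem auxPsi_zero (A : Type*) [CommRing A] (n : ℕ) : auxPsi A n (X ^ n - 1) = 0 := by
  rw [auxPsi, map_sub, map_pow, aeval_X, ← map_pow (MonoidAlgebra.of A (Multiplicative (ZMod n))), ← ofAdd_nsmul]
  simp [MonoidAlgebra.one_def]

theorem auxPsi_surj (A : Type*) [CommRing A] (n : ℕ) [NeZero n] :
    Function.Surjective (auxPsi A n) := by
  intro x
  induction x using MonoidAlgebra.induction_linear with
  | zero => exact ⟨0, map_zero _⟩
  | add f g hf hg =>
    obtain ⟨a, rfl⟩ := hf
    obtain ⟨b, rfl⟩ := hg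
    exact ⟨a + b, map_add _ _ _⟩
  | single g r =>
    refine ⟨C r * X ^ (g.toAdd.val), ?_⟩
    rw [auxPsi, map_mul, map_pow, aeval_X, ← map_pow (MonoidAlgebra.of A (Multiplicative (ZMod n))), aeval_C, ← ofAdd_nsmul]
    simp

theorem auxPsi_map {A F : Type*} [CommRing A] [CommRing F] (φ : A →+* F) (n : ℕ) (q : A[X]) :
    MonoidAlgebra.mapRingHom _ φ (auxPsi A n q) = auxPsi F n (q.map φ) := by
  have : (MonoidAlgebra.mapRingHom _ φ).comp (auxPsi A n).toRingHom =
      (auxPsi F n).toRingHom.comp (mapRingHom φ) := by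
    apply Polynomial.ringHom_ext
    · intro a; simp [auxPsi]
    · simp [auxPsi]
  exact RingHom.congr_fun this q

/-- group algebra to quotient -/
noncomputable def auxLift {A : Type*} [CommRing A] (n : ℕ) [NeZero n] (f : A[X])
    (hf : f ∣ X ^ n - 1) : MonoidAlgebra A (Multiplicative (ZMod n)) →ₐ[A] AdjoinRoot f :=
  MonoidAlgebra.lift A _ _ (AddChar.toMonoidHom (AddChar.zmodChar n (ζ := AdjoinRoot.root f) (by
    have := AdjoinRoot.mk_eq_zero.mpr hf
    simpa [sub_eq_zero] using this)))

theorem auxLift_psi {A : Type*} [CommRing A] (n : ℕ) [NeZero n] (f : A[X])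
    (hf : f ∣ X ^ n - 1) (q : A[X]) : auxLift n f hf (auxPsi A n q) = AdjoinRoot.mk f q := by
  have : (auxLift n f hf).comp (auxPsi A n) = AdjoinRoot.mkₐ f := by
    apply Polynomial.algHom_ext
    have := AddChar.zmodChar_apply' (n := n) (ζ := AdjoinRoot.root f) (by
      have := AdjoinRoot.mk_eq_zero.mpr hf
      simpa [sub_eq_zero] using this) 1
    simp [auxPsi, auxLift] at this ⊢
    exact this
  exact DFunLike.congr_fun this q

theorem auxPsi_idem {A : Type*} [CommRing A] (n : ℕ) (a b f g : A[X]) (h : a * f + b * g = 1)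
    (hfg : X ^ n - 1 ∣ f * g) : IsIdempotentElem (auxPsi A n (a * f)) := by
  have : auxPsi A n (a * f * (a * f) - a * f) = 0 := by
    obtain ⟨c, hc⟩ := hfg
    have : a * f * (a * f) - a * f = (X ^ n - 1) * (- (a * b * c)) := by
      linear_combination (-a * b) * hc + a * f * h
    rw [this, map_mul, auxPsi_zero, zero_mul]
  rw [IsIdempotentElem, ← map_mul, ← sub_eq_zero, ← map_sub, this]

theorem aux_backward {A F : Type*} [CommRing A] [Field F] (φ : A →+* F) (n : ℕ) [NeZero n]
    (hA : IsUnit (n : A)) (H : ∀ d, d ∣ n → Irreducible (cyclotomic d F))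
    (y : MonoidAlgebra F (Multiplicative (ZMod n))) (hy : IsIdempotentElem y) :
    ∃ e, IsIdempotentElem e ∧ MonoidAlgebra.mapRingHom (Multiplicative (ZMod n)) φ e = y := by
  classical
  have hn : 0 < n := Nat.pos_of_ne_zero (NeZero.ne n)
  have hF : IsUnit (n : F) := by simpa using hA.map φ
  have hdvd : ∀ d, d ∣ n → cyclotomic d F ∣ X ^ n - 1 := fun d hd =>
    aux_dvd F hd
  obtain ⟨h, rfl⟩ := auxPsi_surj F n y
  have key : ∀ d, d ∣ n → cyclotomic d F ∣ h ∨ cyclotomic d F ∣ h - 1 := by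
    intro d hd
    have : Fact (Irreducible (cyclotomic d F)) := ⟨H d hd⟩
    have h1 := hy.map (auxLift n _ (hdvd d hd))
    rw [auxLift_psi] at h1
    rcases IsIdempotentElem.iff_eq_zero_or_one.mp h1 with h2 | h2
    · exact Or.inl (AdjoinRoot.mk_eq_zero.mp h2)
    · right
      rw [← AdjoinRoot.mk_eq_zero, map_sub, h2, map_one, sub_self]
  have hprod : (∏ d ∈ n.divisors with cyclotomic d F ∣ h, cyclotomic d A) *
      (∏ d ∈ n.divisors with ¬ cyclotomic d F ∣ h, cyclotomic d A) = X ^ n - 1 := by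
    rw [Finset.prod_filter_mul_prod_filter_not, prod_cyclotomic_eq_X_pow_sub_one hn]
  set f := ∏ d ∈ n.divisors with cyclotomic d F ∣ h, cyclotomic d A with hf
  set g := ∏ d ∈ n.divisors with ¬ cyclotomic d F ∣ h, cyclotomic d A with hg
  have hcop : IsCoprime f g := Separable.isCoprime (hprod ▸ aux_sep hA)
  obtain ⟨a, b, hab⟩ := hcop
  rw [add_comm] at hab
  refine ⟨auxPsi A n (a * f), auxPsi_idem n a b f g (by rw [add_comm]; exact hab)
    (by rw [hprod]), ?_⟩
  rw [auxPsi_map, ← sub_eq_zero, ← map_sub]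
  have hd : X ^ n - 1 ∣ (a * f).map φ - h := by
    rw [← prod_cyclotomic_eq_X_pow_sub_one hn]
    refine Finset.prod_dvd_of_coprime ?_ ?_
    · intro d hd e he hde
      have hd' := hd
      have he' := he
      refine Separable.isCoprime ((aux_sep hF).of_dvd ?_)
      rw [← prod_cyclotomic_eq_X_pow_sub_one hn, ← Finset.prod_pair (f := fun i => cyclotomic i F) hde]
      apply Finset.prod_dvd_prod_of_subset
      intro i hi
      simp only [Finset.mem_insert, Finset.mem_singleton] at hi
      rcases hi with rfl | rfl
      · exact hd'
      · exact he'
    · intro d hd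
      by_cases hT : cyclotomic d F ∣ h
      · have : cyclotomic d A ∣ f := Finset.dvd_prod_of_mem _ (by simp [hT] at hd ⊢; exact hd)
        have h3 : cyclotomic d F ∣ (a * f).map φ := by
          rw [← map_cyclotomic d φ]
          exact Polynomial.map_dvd φ (this.mul_left a)
        exact dvd_sub h3 hT
      · have : cyclotomic d A ∣ g := Finset.dvd_prod_of_mem _ (by simp [hT] at hd ⊢; exact hd)
        have h3 : cyclotomic d F ∣ (b * g).map φ := by
          rw [← map_cyclotomic d φ]
          exact Polynomial.map_dvd φ (this.mul_left b)
        have h4 := (key d (Nat.dvd_of_mem_divisors hd)).resolve_left hT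
        have h5 : (a * f).map φ - h = -(b * g).map φ - (h - 1) := by
          have := congrArg (Polynomial.map φ) hab
          rw [Polynomial.map_add, Polynomial.map_one] at this
          linear_combination this
        rw [h5]
        exact dvd_sub (h3.neg_right) h4
  obtain ⟨c, hc⟩ := hd
  rw [hc, map_mul, auxPsi_zero, zero_mul]

theorem aux_forward {A F : Type*} [CommRing A] [Field F] (φ : A →+* F) (n : ℕ) [NeZero n]
    (hA : IsUnit (n : A)) (d : ℕ) (hd : d ∣ n) (hdom : IsDomain (AdjoinRoot (cyclotomic d A)))
    (H : ∀ y, IsIdempotentElem y → ∃ e, IsIdempotentElem e ∧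
      MonoidAlgebra.mapRingHom (Multiplicative (ZMod n)) φ e = y) :
    Irreducible (cyclotomic d F) := by
  have hn : 0 < n := Nat.pos_of_ne_zero (NeZero.ne n)
  have hF : IsUnit (n : F) := by simpa using hA.map φ
  have hdA := aux_dvd A hd
  have hdF := aux_dvd F hd
  refine ⟨?_, ?_⟩
  · intro hu
    have := degree_eq_zero_of_isUnit hu
    exact (degree_cyclotomic_pos d F (Nat.pos_of_dvd_of_pos hd hn)).ne' this
  · intro f g hfg
    obtain ⟨c, hc⟩ := id hdF
    have hprod : f * (g * c) = X ^ n - 1 := by rw [hc, hfg]; ring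
    have hcop : IsCoprime f (g * c) := Separable.isCoprime (hprod ▸ aux_sep hF)
    obtain ⟨a, b, hab⟩ := hcop
    obtain ⟨e, he, hey⟩ := H _ (auxPsi_idem n a b f (g * c) hab (by rw [hprod]))
    obtain ⟨q, rfl⟩ := auxPsi_surj A n e
    have h1 := he.map (auxLift n _ hdA)
    rw [auxLift_psi] at h1
    rw [auxPsi_map] at hey
    have hey' := congrArg (auxLift n _ hdF) hey
    rw [auxLift_psi, auxLift_psi] at hey'
    have h3 : cyclotomic d F ∣ q.map φ - a * f := by
      rw [← AdjoinRoot.mk_eq_zero, map_sub, hey', sub_self]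
    rcases IsIdempotentElem.iff_eq_zero_or_one.mp h1 with h2 | h2
    · right
      have h4 := Polynomial.map_dvd φ (AdjoinRoot.mk_eq_zero.mp h2)
      rw [map_cyclotomic] at h4
      have h5 : cyclotomic d F ∣ a * f := (dvd_sub_right h4).mp h3
      have h6 : g ∣ a * f := (Dvd.intro_left f hfg.symm).trans h5
      have h7 : g ∣ 1 := hab ▸ dvd_add h6 ((dvd_mul_right g c).mul_left b)
      exact isUnit_of_dvd_one h7
    · left
      have h2' : cyclotomic d A ∣ q - 1 := by
        rw [← AdjoinRoot.mk_eq_zero, map_sub, h2, map_one, sub_self]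
      have h4 := Polynomial.map_dvd φ h2'
      rw [map_cyclotomic, Polynomial.map_sub, Polynomial.map_one] at h4
      have h5 := dvd_sub h4 h3
      have h6 : f ∣ a * f - 1 :=
        ((Dvd.intro g hfg.symm).trans h5).trans (dvd_of_eq (by ring))
      exact isUnit_of_dvd_one ((dvd_sub_right (dvd_mul_left f a)).mp h6)

theorem aux_zloc_unit (p : ℕ) [Fact p.Prime] (z : ℤ) (hz : ¬ (p : ℤ) ∣ z) :
    IsUnit (algebraMap ℤ (ZLoc p) z) :=
  IsLocalization.map_units (ZLoc p)
    (⟨z, fun h => hz (Ideal.mem_span_singleton.mp h)⟩ : (Ideal.span {(p : ℤ)}).primeCompl)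

theorem aux_zloc_lift (p : ℕ) [Fact p.Prime] (F : Type) [Field F]
    (hF : ∀ z : ℤ, (z : F) = 0 → (p : ℤ) ∣ z) :
    Nonempty (ZLoc p →+* F) := by
  refine ⟨IsLocalization.lift (M := (Ideal.span {(p : ℤ)}).primeCompl) (g := Int.castRingHom F) ?_⟩
  rintro ⟨z, hz⟩
  rw [isUnit_iff_ne_zero]
  intro h
  exact hz (Ideal.mem_span_singleton.mpr (hF z (by simpa using h)))

/-- Let `p` be a prime and `n > 0` with `p ∤ n`, and let `Cₙ` be the cyclic group of order
`n`. Then `ℤ_(p)Cₙ` is semiperfect if and only if for each divisor `d` of `n` the `d`-th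
cyclotomic polynomial remains irreducible modulo `p`. -/
theorem isSemiperfectRing_zloc_cyclic_iff_cyclotomic_irreducible
    (p n : ℕ) [Fact p.Prime] (hn : 0 < n) (hpn : ¬ p ∣ n) :
    IsSemiperfectRing (MonoidAlgebra (ZLoc p) (Multiplicative (ZMod n))) ↔
      ∀ d : ℕ, d ∣ n →
        Irreducible ((Polynomial.cyclotomic d ℤ).map (Int.castRingHom (ZMod p))) := by
  have : NeZero n := ⟨hn.ne'⟩
  obtain ⟨φ⟩ := aux_zloc_lift p (ZMod p) (fun z hz => (ZMod.intCast_zmod_eq_zero_iff_dvd z p).mp hz)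
  obtain ⟨θ⟩ := aux_zloc_lift p ℚ (fun z hz => by
    have : z = 0 := by exact_mod_cast hz
    simp [this])
  have hφ : Function.Surjective φ := by
    intro x
    obtain ⟨z, rfl⟩ := ZMod.intCast_surjective x
    exact ⟨z, map_intCast φ z⟩
  have hA : IsUnit (n : ZLoc p) := by
    have := aux_zloc_unit p n (by exact_mod_cast hpn)
    simpa using this
  have hF : IsUnit (n : ZMod p) := by simpa using hA.map φ
  have : NeZero (Nat.card (Multiplicative (ZMod n)) : ZMod p) := by
    constructor
    simpa using hF.ne_zero
  have : IsSemisimpleRing (MonoidAlgebra (ZMod p) (Multiplicative (ZMod n))) := inferInstance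
  have hs : Function.Surjective (MonoidAlgebra.mapRingHom (Multiplicative (ZMod n)) φ) :=
    MonoidAlgebra.map_surjective (φ : ZLoc p →+ ZMod p) hφ
  rw [aux_semiperfect _ hs (aux_ker φ)]
  simp only [map_cyclotomic]
  refine ⟨fun H d hd => ?_, fun H => aux_backward φ n hA H⟩
  refine aux_forward φ n hA d hd ?_ H
  apply AdjoinRoot.isDomain_of_prime
  have : IsDomain (ZLoc p) := inferInstance
  rw [← UniqueFactorizationMonoid.irreducible_iff_prime]
  refine Monic.irreducible_of_irreducible_map θ _ (cyclotomic.monic d _) ?_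
  rw [map_cyclotomic]
  exact cyclotomic.irreducible_rat (Nat.pos_of_dvd_of_pos hd hn)
end

section
/- Let p be a prime and n a positive integer with p ∤ n, and let Cₙ be the cyclic group of order n. Then ℤ_(p)Cₙ is semiperfect if and only if for each divisor d of n the multiplicative order of p in (ℤ/dℤ)ˣ equals φ(d), Euler's totient of d (i.e., p is a primitive root modulo d for each d | n). -/
open Polynomial

lemma semiperfect_iff {R S : Type*} [CommRing R] [CommRing S] (Ψ : R →+* S)
    (hs : Function.Surjective Ψ) (hk : RingHom.ker Ψ = Ideal.jacobson ⊥)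
    (hS : IsSemisimpleRing S) : IsSemiperfectRing R ↔
      ∀ x : S, IsIdempotentElem x → ∃ e : R, IsIdempotentElem e ∧ Ψ e = x := by
  have key : (ringJacobson R).ringCon = RingCon.ker Ψ := by
    ext x y
    rw [RingCon.ker_apply, TwoSidedIdeal.rel_iff, ← sub_eq_zero, ← map_sub, ← RingHom.mem_ker, hk,
      ringJacobson, TwoSidedIdeal.mem_jacobson_iff, Ideal.mem_jacobson_iff]
    simp
  have hb : Function.Bijective ((ringJacobson R).ringCon.lift Ψ key.le) := by
    refine ⟨?_, RingCon.lift_surjective_of_surjective _ hs⟩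
    rw [RingCon.lift_injective_iff]
    exact key
  let E := RingEquiv.ofBijective _ hb
  have hE : ∀ e, E ((ringJacobson R).ringCon.mk' e) = Ψ e := fun e => rfl
  constructor
  · rintro ⟨-, h⟩ x hx
    obtain ⟨e, he, h2⟩ := h (E.symm x) (hx.map E.symm)
    refine ⟨e, he, ?_⟩
    rw [← hE, h2, E.apply_symm_apply]
  · intro h
    refine ⟨E.symm.isSemisimpleRing, fun x hx => ?_⟩
    obtain ⟨e, he, h2⟩ := h (E x) (hx.map E)
    refine ⟨e, he, E.injective ?_⟩
    rw [hE, h2]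

lemma ker_le {A R S : Type*} [CommRing A] [IsLocalRing A] [CommRing R] [Algebra A R]
    [Module.Finite A R] [CommRing S] (Ψ : R →+* S)
    (hs : Function.Surjective Ψ) (hk : RingHom.ker Ψ = (IsLocalRing.maximalIdeal A).map (algebraMap A R))
    (hS : Ideal.jacobson (⊥ : Ideal S) = ⊥) : RingHom.ker Ψ = Ideal.jacobson ⊥ := by
  apply le_antisymm
  · rw [hk, Ideal.map_le_iff_le_comap, Ideal.jacobson, Ideal.comap_sInf]
    refine le_iInf₂ fun M hM => ?_
    have := hM.2
    have := Ideal.isMaximal_comap_of_isIntegral_of_isMaximal (R := A) M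
    rw [IsLocalRing.eq_maximalIdeal this]
  · have := Ideal.comap_jacobson_of_surjective hs (K := ⊥)
    rw [hS] at this
    rw [show RingHom.ker Ψ = Ideal.comap Ψ ⊥ from rfl, this]
    exact Ideal.jacobson_mono bot_le

lemma red_jac {S : Type*} [CommRing S] [IsSemisimpleRing S] : Ideal.jacobson (⊥ : Ideal S) = ⊥ := by
  have := IsSemisimpleRing.jacobson_eq_bot S
  rw [Ring.jacobson_eq_sInf_isMaximal] at this; simpa [Ideal.jacobson] using this
  
noncomputable def piHom (A : Type*) [CommRing A] (n : ℕ) :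
    A[X] →ₐ[A] MonoidAlgebra A (Multiplicative (ZMod n)) :=
  aeval (MonoidAlgebra.of A (Multiplicative (ZMod n)) (Multiplicative.ofAdd 1))

lemma piHom_X_pow (A : Type*) [CommRing A] (n k : ℕ) : piHom A n (X ^ k) =
    MonoidAlgebra.of A (Multiplicative (ZMod n)) (Multiplicative.ofAdd (k : ZMod n)) := by
  rw [piHom, map_pow, aeval_X, ← map_pow, ← ofAdd_nsmul]
  simp

lemma piHom_surj (A : Type*) [CommRing A] (n : ℕ) (hn : 0 < n) :
    Function.Surjective (piHom A n) := by
  have : NeZero n := ⟨hn.ne'⟩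
  intro x
  induction x using MonoidAlgebra.induction_on with
  | of g =>
    refine ⟨X ^ (Multiplicative.toAdd g).val, ?_⟩
    rw [piHom_X_pow]
    simp
  | add f g hf hg =>
    obtain ⟨a, rfl⟩ := hf
    obtain ⟨b, rfl⟩ := hg
    exact ⟨a + b, map_add _ _ _⟩
  | smul r f hf =>
    obtain ⟨a, rfl⟩ := hf
    exact ⟨r • a, map_smul _ _ _⟩

lemma piHom_eq_zero_iff (A : Type*) [CommRing A] [Nontrivial A] (n : ℕ) (hn : 0 < n) (f : A[X]) :
    piHom A n f = 0 ↔ X ^ n - 1 ∣ f := by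
  have : NeZero n := ⟨hn.ne'⟩
  have hz : piHom A n (X ^ n - 1) = 0 := by
    rw [map_sub, piHom_X_pow, map_one, sub_eq_zero]
    simp [MonoidAlgebra.one_def]
  constructor
  · intro h
    have hm : (X ^ n - 1 : A[X]).Monic := by simpa using monic_X_pow_sub_C (1 : A) hn.ne'
    rw [← modByMonic_eq_zero_iff_dvd hm]
    have hdeg : (f %ₘ (X ^ n - 1)).natDegree < n := by
      have := natDegree_modByMonic_lt f hm (by
        intro h1
        have := congrArg natDegree h1
        rw [← C_1, natDegree_X_pow_sub_C, natDegree_C] at this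
        omega)
      rwa [← C_1, natDegree_X_pow_sub_C] at this
    have h2 := modByMonic_add_div f (X ^ n - 1)
    set r := f %ₘ (X ^ n - 1) with hr
    have h3 : piHom A n r = 0 := by
      rw [← h2, map_add, map_mul, hz] at h
      simpa using h
    rw [as_sum_range' r n hdeg] at h3
    ext i
    rcases lt_or_ge i n with hi | hi
    · have h4 := congrArg (fun z : MonoidAlgebra A (Multiplicative (ZMod n)) =>
        z.coeff (Multiplicative.ofAdd (i : ZMod n))) h3
      have h5 : ∀ k, piHom A n (monomial k (r.coeff k)) =
        MonoidAlgebra.single (Multiplicative.ofAdd (k : ZMod n)) (r.coeff k) := by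
        intro k
        rw [← smul_X_eq_monomial, map_smul, piHom_X_pow]
        simp
      simp only [map_sum, h5] at h4
      rw [MonoidAlgebra.coeff_sum, Finsupp.finsetSum_apply, Finset.sum_eq_single i] at h4
      · simpa using h4
      · intro k hk hki
        have : ((k : ℕ) : ZMod n) ≠ (i : ZMod n) := by
          intro h
          rw [ZMod.natCast_eq_natCast_iff', Nat.mod_eq_of_lt (Finset.mem_range.1 hk),
            Nat.mod_eq_of_lt hi] at h
          exact hki h
        simp [MonoidAlgebra.coeff_single, this]
      · intro h
        exact absurd (Finset.mem_range.2 hi) h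
    · simp [coeff_eq_zero_of_natDegree_lt (hdeg.trans_le hi)]
  · rintro ⟨g, rfl⟩
    rw [map_mul, hz, zero_mul]

lemma cyc_semisimple (p n : ℕ) [Fact p.Prime] (hn : 0 < n) (hpn : ¬ p ∣ n) :
    IsSemisimpleRing (AdjoinRoot (X ^ n - 1 : (ZMod p)[X])) := by
  have hm : (X ^ n - 1 : (ZMod p)[X]).Monic := by simpa using monic_X_pow_sub_C (1 : ZMod p) hn.ne'
  have hsep : (X ^ n - 1 : (ZMod p)[X]).Separable := by
    have : NeZero (n : ZMod p) := ⟨by rwa [Ne, ZMod.natCast_eq_zero_iff]⟩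
    exact X_pow_sub_one_separable_iff.2 this.out
  have : Module.Finite (ZMod p) (AdjoinRoot (X ^ n - 1 : (ZMod p)[X])) := hm.finite_adjoinRoot
  have : IsArtinianRing (AdjoinRoot (X ^ n - 1 : (ZMod p)[X])) :=
    IsArtinianRing.of_finite (ZMod p) _
  have : IsReduced (AdjoinRoot (X ^ n - 1 : (ZMod p)[X])) := by
    refine (Ideal.isRadical_iff_quotient_reduced _).1 ?_
    rw [← isRadical_iff_span_singleton]
    exact hsep.squarefree.isRadical
  exact IsArtinianRing.isSemisimpleRing_of_isReduced _

lemma crit (p n : ℕ) [Fact p.Prime] (hn : 0 < n) (hpn : ¬ p ∣ n)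
    (A : Type*) [CommRing A] [IsLocalRing A] (ρ : A →+* ZMod p) :
    IsSemiperfectRing (MonoidAlgebra A (Multiplicative (ZMod n))) ↔
      ∀ g : (ZMod p)[X], X ^ n - 1 ∣ g * (g - 1) →
        ∃ E : A[X], X ^ n - 1 ∣ E * (E - 1) ∧ X ^ n - 1 ∣ E.map ρ - g := by
  have : NeZero n := ⟨hn.ne'⟩
  have hρ : Function.Surjective ρ := ZMod.ringHom_surjective ρ
  have hρk : RingHom.ker ρ = IsLocalRing.maximalIdeal A :=
    IsLocalRing.eq_maximalIdeal (RingHom.ker_isMaximal_of_surjective ρ hρ)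
  let S := AdjoinRoot (X ^ n - 1 : (ZMod p)[X])
  let R := MonoidAlgebra A (Multiplicative (ZMod n))
  have hS : IsSemisimpleRing S := cyc_semisimple p n hn hpn
  let π : A[X] →+* R := (piHom A n).toRingHom
  have hπ : Function.Surjective π := piHom_surj A n hn
  have hπ0 : ∀ f, π f = 0 ↔ X ^ n - 1 ∣ f := piHom_eq_zero_iff A n hn
  let σ : A[X] →+* S := (AdjoinRoot.mk _).comp (mapRingHom ρ)
  have hσ : Function.Surjective σ := AdjoinRoot.mk_surjective.comp (map_surjective ρ hρ)
  have hσ0 : ∀ f, σ f = 0 ↔ X ^ n - 1 ∣ f.map ρ := fun f => AdjoinRoot.mk_eq_zero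
  have hle : RingHom.ker π ≤ RingHom.ker σ := by
    intro f hf
    rw [RingHom.mem_ker, hπ0] at hf
    rw [RingHom.mem_ker, hσ0]
    simpa using Polynomial.map_dvd ρ hf
  let Ψ : R →+* S := RingHom.liftOfSurjective π hπ ⟨σ, hle⟩
  have hΨ : ∀ f, Ψ (π f) = σ f := fun f => RingHom.liftOfRightInverse_comp_apply _ _ _ _ f
  have hΨs : Function.Surjective Ψ := by
    intro x
    obtain ⟨f, rfl⟩ := hσ x
    exact ⟨π f, hΨ f⟩
  have hπC : ∀ a, π (C a) = algebraMap A R a := fun a => (piHom A n).commutes a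
  have hk : RingHom.ker Ψ = (IsLocalRing.maximalIdeal A).map (algebraMap A R) := by
    apply le_antisymm
    · intro x hx
      obtain ⟨f, rfl⟩ := hπ x
      rw [RingHom.mem_ker, hΨ, hσ0] at hx
      obtain ⟨q, hq⟩ := hx
      obtain ⟨Q, rfl⟩ := map_surjective ρ hρ q
      have h1 : f - (X ^ n - 1) * Q ∈ RingHom.ker (mapRingHom ρ) := by
        rw [RingHom.mem_ker]
        simp [hq]
      rw [ker_mapRingHom, hρk] at h1
      have h2 := Ideal.mem_map_of_mem π h1
      rw [Ideal.map_map, map_sub, (hπ0 ((X ^ n - 1) * Q)).2 (dvd_mul_right _ _), sub_zero] at h2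
      rwa [show π.comp C = algebraMap A R from RingHom.ext hπC] at h2
    · rw [Ideal.map_le_iff_le_comap]
      intro a ha
      rw [← hρk, RingHom.mem_ker] at ha
      rw [Ideal.mem_comap, RingHom.mem_ker, ← hπC, hΨ, hσ0]
      simp [ha]
  have : Module.Finite A R := inferInstance
  have hJ := ker_le Ψ hΨs hk red_jac
  rw [show IsSemiperfectRing (MonoidAlgebra A (Multiplicative (ZMod n))) ↔ _ from
    semiperfect_iff Ψ hΨs hJ hS]
  constructor
  · intro h g hg
    obtain ⟨e, he, h2⟩ := h (AdjoinRoot.mk _ g) (by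
      rw [IsIdempotentElem, ← sub_eq_zero, ← map_mul, ← map_sub, AdjoinRoot.mk_eq_zero]
      convert hg using 1
      ring)
    obtain ⟨E, rfl⟩ := hπ e
    refine ⟨E, ?_, ?_⟩
    · rw [← hπ0, map_mul, map_sub, map_one, mul_sub, he, mul_one, sub_self]
    · rw [← AdjoinRoot.mk_eq_zero, map_sub, sub_eq_zero, ← h2, hΨ]
      rfl
  · intro h x hx
    obtain ⟨g, rfl⟩ := AdjoinRoot.mk_surjective x
    obtain ⟨E, h1, h2⟩ := h g (by
      rw [← AdjoinRoot.mk_eq_zero, map_mul, map_sub, map_one, mul_sub, hx, mul_one, sub_self])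
    refine ⟨π E, ?_, ?_⟩
    · rw [IsIdempotentElem, ← sub_eq_zero, ← map_mul, ← map_sub, hπ0]
      convert h1 using 1
      ring
    · rw [hΨ, ← sub_eq_zero]
      rw [← AdjoinRoot.mk_eq_zero, map_sub] at h2
      exact h2

lemma deg_irr (p d : ℕ) [Fact p.Prime] (hpd : ¬ p ∣ d) (h : (ZMod p)[X])
    (hd : h ∣ cyclotomic d (ZMod p)) (hi : Irreducible h) :
    h.natDegree = orderOf (p : ZMod d) := by
  have hc : p.Coprime d := (Fact.out : p.Prime).coprime_iff_not_dvd.2 hpd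
  rw [natDegree_of_dvd_cyclotomic_of_irreducible (p := p) (f := 1) (by simp) hc hd hi,
    ← orderOf_units]
  simp

lemma forward (p n : ℕ) [Fact p.Prime] (hn : 0 < n) (hpn : ¬ p ∣ n)
    (A : Type) [CommRing A] (ρ : A →+* ZMod p)
    (hA : ∀ d : ℕ, 0 < d → Prime (cyclotomic d A))
    (H : ∀ g : (ZMod p)[X], X ^ n - 1 ∣ g * (g - 1) →
        ∃ E : A[X], X ^ n - 1 ∣ E * (E - 1) ∧ X ^ n - 1 ∣ E.map ρ - g) (d : ℕ) (hd : d ∣ n) :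
    orderOf (p : ZMod d) = Nat.totient d := by
  have hpd : ¬ p ∣ d := fun h => hpn (h.trans hd)
  have hd0 : 0 < d := Nat.pos_of_dvd_of_pos hd hn
  have hsep : (X ^ n - 1 : (ZMod p)[X]).Separable := by
    have : NeZero (n : ZMod p) := ⟨by rwa [Ne, ZMod.natCast_eq_zero_iff]⟩
    exact X_pow_sub_one_separable_iff.2 this.out
  have hcd : ∀ (B : Type) [CommRing B], cyclotomic d B ∣ X ^ n - 1 := fun B _ => by
    rw [← prod_cyclotomic_eq_X_pow_sub_one hn]
    exact Finset.dvd_prod_of_mem _ (Nat.mem_divisors.2 ⟨hd, hn.ne'⟩)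
  have hnu : ¬ IsUnit (cyclotomic d (ZMod p)) := by
    apply not_isUnit_of_natDegree_pos
    rw [natDegree_cyclotomic]
    exact Nat.totient_pos.2 hd0
  obtain ⟨h, hi, hdvd⟩ := WfDvdMonoid.exists_irreducible_factor hnu (cyclotomic_ne_zero _ _)
  obtain ⟨k, hk⟩ := hdvd.trans (hcd (ZMod p))
  have hco : IsCoprime h k := (hk ▸ hsep).isCoprime
  obtain ⟨u, v, huv⟩ := hco
  obtain ⟨E, hE1, hE2⟩ := H (v * k) (by
    rw [hk]
    exact ⟨- (u * v), by linear_combination (- v * k) * (-huv)⟩)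
  have hcE : cyclotomic d (ZMod p) ∣ E.map ρ - v * k := (hcd _).trans hE2
  rw [← deg_irr p d hpd h hdvd hi]
  rcases (hA d hd0).dvd_or_dvd ((hcd A).trans hE1) with h1 | h1
  · exfalso
    have h2 := Polynomial.map_dvd ρ h1
    rw [map_cyclotomic] at h2
    have h3 : h ∣ v * k := by
      have := dvd_sub (hdvd.trans h2) (hdvd.trans hcE)
      rwa [sub_sub_cancel] at this
    apply hi.not_isUnit
    rw [isUnit_iff_dvd_one, ← huv]
    exact dvd_add (dvd_mul_left _ _) h3
  · have h2 := Polynomial.map_dvd ρ h1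
    rw [map_cyclotomic] at h2
    have h3 : cyclotomic d (ZMod p) ∣ 1 - v * k := by
      have := dvd_sub hcE h2
      rw [Polynomial.map_sub, Polynomial.map_one] at this
      convert this using 1
      ring
    have h4 : IsCoprime (cyclotomic d (ZMod p)) k := by
      obtain ⟨w, hw⟩ := h3
      exact ⟨w, v, by linear_combination -hw⟩
    have h5 : cyclotomic d (ZMod p) ∣ h := h4.dvd_of_dvd_mul_right (hk ▸ hcd _)
    apply le_antisymm
    · rw [← natDegree_cyclotomic d (ZMod p)]
      exact natDegree_le_of_dvd hdvd (cyclotomic_ne_zero _ _)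
    · rw [← natDegree_cyclotomic d (ZMod p)]
      exact natDegree_le_of_dvd h5 hi.ne_zero

lemma backward (p n : ℕ) [Fact p.Prime] (hn : 0 < n) (hpn : ¬ p ∣ n)
    (A : Type) [CommRing A] (ρ : A →+* ZMod p) (hu : IsUnit (n : A))
    (H : ∀ d : ℕ, d ∣ n → orderOf (p : ZMod d) = Nat.totient d)
    (g : (ZMod p)[X]) (hg : X ^ n - 1 ∣ g * (g - 1)) :
    ∃ E : A[X], X ^ n - 1 ∣ E * (E - 1) ∧ X ^ n - 1 ∣ E.map ρ - g := by
  classical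
  have hirr : ∀ d, d ∣ n → Prime (cyclotomic d (ZMod p)) := by
    intro d hd
    have hpd : ¬ p ∣ d := fun h => hpn (h.trans hd)
    refine (ZMod.irreducible_of_dvd_cyclotomic_of_natDegree hpd dvd_rfl ?_).prime
    rw [natDegree_cyclotomic, ← orderOf_units, ZMod.coe_unitOfCoprime, H d hd]
  have hsepA : (X ^ n - 1 : A[X]).Separable := by
    simpa using separable_X_pow_sub_C_unit (1 : Aˣ) hu
  let P : ℕ → Prop := fun d => cyclotomic d (ZMod p) ∣ g
  let a (B : Type) [CommRing B] : B[X] := ∏ d ∈ n.divisors with P d, cyclotomic d B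
  let b (B : Type) [CommRing B] : B[X] := ∏ d ∈ n.divisors with ¬ P d, cyclotomic d B
  have hab : ∀ (B : Type) [CommRing B], a B * b B = X ^ n - 1 := fun B _ => by
    rw [← prod_cyclotomic_eq_X_pow_sub_one hn]
    exact Finset.prod_filter_mul_prod_filter_not _ _ _
  have hmapa : (a A).map ρ = a (ZMod p) := by simp [a, Polynomial.map_prod]
  have hmapb : (b A).map ρ = b (ZMod p) := by simp [b, Polynomial.map_prod]
  have hmon : IsCoprime (a A) (b A) := ((hab A).symm ▸ hsepA).isCoprime
  have hmonp : IsCoprime (a (ZMod p)) (b (ZMod p)) := by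
    have := hmon.map (mapRingHom ρ)
    rwa [coe_mapRingHom, hmapa, hmapb] at this
  have hag : a (ZMod p) ∣ g := by
    have hc : IsCoprime (a (ZMod p)) (g - 1) := by
      refine IsCoprime.prod_left fun d hd => ?_
      obtain ⟨hd, hPd⟩ := Finset.mem_filter.1 hd
      obtain ⟨w, hw⟩ := hPd
      exact ⟨w, -1, by linear_combination -hw⟩
    exact hc.dvd_of_dvd_mul_right (((hab (ZMod p)) ▸ dvd_mul_right _ _ : a (ZMod p) ∣ X ^ n - 1).trans hg)
  have hbg : b (ZMod p) ∣ g - 1 := by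
    have hc : IsCoprime (b (ZMod p)) g := by
      refine IsCoprime.prod_left fun d hd => ?_
      obtain ⟨hd, hPd⟩ := Finset.mem_filter.1 hd
      exact ((hirr d (Nat.dvd_of_mem_divisors hd)).irreducible.coprime_iff_not_dvd).2 hPd
    exact hc.dvd_of_dvd_mul_left (((hab (ZMod p)) ▸ dvd_mul_left _ _ : b (ZMod p) ∣ X ^ n - 1).trans hg)
  obtain ⟨u, v, huv⟩ := hmon
  refine ⟨u * a A, ?_, ?_⟩
  · rw [← hab]
    exact ⟨-(u * v), by linear_combination (u * a A) * huv⟩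
  · rw [← hab]
    refine hmonp.mul_dvd ?_ ?_
    · rw [Polynomial.map_mul, hmapa]
      exact dvd_sub (dvd_mul_left _ _) hag
    · have h1 : b (ZMod p) ∣ (u * a A).map ρ - 1 := by
        rw [← hmapb, ← Polynomial.map_one ρ, ← Polynomial.map_sub]
        exact Polynomial.map_dvd ρ ⟨-v, by linear_combination huv⟩
      have := dvd_sub h1 hbg
      rwa [sub_sub_sub_cancel_right] at this

lemma prime_cyc (p d : ℕ) [Fact p.Prime] (hd : 0 < d) : Prime (cyclotomic d (ZLoc p)) := by
  let M := (Ideal.span {(p : ℤ)}).primeCompl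
  have hM : M ≤ nonZeroDivisors ℤ := Ideal.primeCompl_le_nonZeroDivisors _
  have hinj : Function.Injective (algebraMap ℤ (ZLoc p)) := IsLocalization.injective _ hM
  have hprime : Prime (cyclotomic d ℤ) := (cyclotomic.irreducible hd).prime
  have hnontriv : Nontrivial (ZLoc p) := inferInstance
  have hdvd : ∀ f : ℤ[X], cyclotomic d (ZLoc p) ∣ f.map (algebraMap ℤ (ZLoc p)) ↔
      cyclotomic d ℤ ∣ f := fun f => by
    rw [← map_cyclotomic d (algebraMap ℤ (ZLoc p)), map_dvd_map _ hinj (cyclotomic.monic d ℤ)]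
  have hcl : ∀ f : (ZLoc p)[X], ∃ f0 : ℤ[X], Associated (f0.map (algebraMap ℤ (ZLoc p))) f := by
    intro f
    obtain ⟨b, hb, h⟩ := IsLocalization.integerNormalization_spec M f
    refine ⟨IsLocalization.integerNormalization M f, ?_⟩
    have h2 : (IsLocalization.integerNormalization M f).map (algebraMap ℤ (ZLoc p)) =
        C (algebraMap ℤ (ZLoc p) b) * f := by
      rw [h]
      ext i
      rw [coeff_C_mul, ← Algebra.smul_def]
      exact coeff_smul b f i
    rw [h2]
    exact (associated_isUnit_mul_left_iff ((IsLocalization.map_units (ZLoc p) (⟨b, hb⟩ : M)).map C)).2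
      (Associated.refl f)
  refine ⟨cyclotomic_ne_zero _ _, ?_, ?_⟩
  · intro h
    apply hprime.not_isUnit
    have := h.dvd (a := 1)
    rw [isUnit_iff_dvd_one, ← hdvd]
    simpa using this
  · intro f g hfg
    obtain ⟨f0, hf⟩ := hcl f
    obtain ⟨g0, hg⟩ := hcl g
    rw [← (hf.mul_mul hg).dvd_iff_dvd_right, ← Polynomial.map_mul, hdvd] at hfg
    rw [← hf.dvd_iff_dvd_right, ← hg.dvd_iff_dvd_right, hdvd, hdvd]
    exact hprime.dvd_or_dvd hfg

lemma exists_rho (p : ℕ) [hp : Fact p.Prime] : Nonempty (ZLoc p →+* ZMod p) := by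
  refine ⟨IsLocalization.lift (M := (Ideal.span {(p : ℤ)}).primeCompl)
    (g := Int.castRingHom (ZMod p)) ?_⟩
  rintro ⟨y, hy⟩
  rw [isUnit_iff_ne_zero]
  intro h
  apply hy
  rw [SetLike.mem_coe, Ideal.mem_span_singleton, ← ZMod.intCast_zmod_eq_zero_iff_dvd]
  exact h

lemma unit_n (p n : ℕ) [Fact p.Prime] (hpn : ¬ p ∣ n) : IsUnit (n : ZLoc p) := by
  have := IsLocalization.map_units (ZLoc p) (⟨(n : ℤ), fun h => hpn (by
    rw [SetLike.mem_coe, Ideal.mem_span_singleton] at h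
    exact_mod_cast h)⟩ : (Ideal.span {(p : ℤ)}).primeCompl)
  simpa using this

/-- Let `p` be a prime and `n > 0` with `p ∤ n`, and let `Cₙ` be the cyclic group of order
`n`. Then `ℤ_(p)Cₙ` is semiperfect if and only if for each divisor `d` of `n` the
multiplicative order of `p` modulo `d` equals `φ(d)`, i.e. `p` is a primitive root mod `d`. -/
theorem isSemiperfectRing_zloc_cyclic_iff_orderOf
    (p n : ℕ) [Fact p.Prime] (hn : 0 < n) (hpn : ¬ p ∣ n) :
    IsSemiperfectRing (MonoidAlgebra (ZLoc p) (Multiplicative (ZMod n))) ↔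
      ∀ d : ℕ, d ∣ n → orderOf (p : ZMod d) = Nat.totient d := by
  obtain ⟨ρ⟩ := exists_rho p
  refine (crit p n hn hpn (ZLoc p) ρ).trans ⟨fun H d hd => ?_, fun H g hg => ?_⟩
  · exact forward p n hn hpn (ZLoc p) ρ (fun d hd => prime_cyc p d hd) H d hd
  · exact backward p n hn hpn (ZLoc p) ρ (unit_n p n hpn) H g hg
end

section
/- Let p be an odd prime and let Q₈ be the quaternion group of order 8. Then ℤ_(p)Q₈ is not semiperfect. -/
open Quaternion

theorem aux_jac {S R : Type*} [CommRing S] [IsLocalRing S] [Ring R] [Algebra S R] [Module.Finite S R]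
    (s : S) (hs : s ∈ IsLocalRing.maximalIdeal S) (r : R) : s • r ∈ ringJacobson R := by
  unfold ringJacobson
  rw [TwoSidedIdeal.mem_jacobson_iff]
  intro y
  let N : Submodule S R := (Ideal.span {y * (s • r) + 1} : Ideal R).restrictScalars S
  have h : (⊤ : Submodule S R) ≤ N := by
    refine Submodule.le_of_le_smul_of_le_jacobson_bot (I := IsLocalRing.maximalIdeal S)
      Module.Finite.fg_top ?_ ?_
    · rw [IsLocalRing.jacobson_eq_maximalIdeal _ bot_ne_top]
    · intro t _
      have : t = t * (y * (s • r) + 1) + s • (-(t * y * r)) := by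
        simp [mul_add, mul_assoc]
      rw [this]
      refine Submodule.add_mem_sup ?_ ?_
      · exact Ideal.mul_mem_left _ _ (Ideal.subset_span rfl)
      · exact Submodule.smul_mem_smul hs trivial
  have h1 : (1 : R) ∈ (Ideal.span {y * (s • r) + 1} : Ideal R) := h (x := 1) trivial
  obtain ⟨z, hz⟩ := Ideal.mem_span_singleton'.1 h1
  refine ⟨z, ?_⟩
  have : z * y * (s • r) + z - 1 = 0 := by rw [← hz]; noncomm_ring
  rw [this]; exact zero_mem _

/-- values of the powers of `i` -/
def auxPow (S : Type*) [CommRing S] : Fin 4 → ℍ[S] :=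
  ![⟨1, 0, 0, 0⟩, ⟨0, 1, 0, 0⟩, ⟨-1, 0, 0, 0⟩, ⟨0, -1, 0, 0⟩]

def auxPowJ (S : Type*) [CommRing S] : Fin 4 → ℍ[S] :=
  ![⟨0, 0, 1, 0⟩, ⟨0, 0, 0, -1⟩, ⟨0, 0, -1, 0⟩, ⟨0, 0, 0, 1⟩]

def auxFun (S : Type*) [CommRing S] : QuaternionGroup 2 → ℍ[S]
  | .a i => auxPow S i
  | .xa i => auxPowJ S i

theorem aux1 (S : Type*) [CommRing S] : ∀ i j : Fin 4, auxPow S (i + j) = auxPow S i * auxPow S j := by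
  intro i j
  fin_cases i <;> fin_cases j <;> ext <;> simp only [re_mul, imI_mul, imJ_mul, imK_mul] <;> simp [auxPow]
theorem aux2 (S : Type*) [CommRing S] : ∀ i j : Fin 4, auxPowJ S (j - i) = auxPow S i * auxPowJ S j := by
  intro i j
  fin_cases i <;> fin_cases j <;> ext <;> simp only [re_mul, imI_mul, imJ_mul, imK_mul] <;> simp [auxPow, auxPowJ]
theorem aux3 (S : Type*) [CommRing S] : ∀ i j : Fin 4, auxPowJ S (i + j) = auxPowJ S i * auxPow S j := by
  intro i j
  fin_cases i <;> fin_cases j <;> ext <;> simp only [re_mul, imI_mul, imJ_mul, imK_mul] <;> simp [auxPow, auxPowJ]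
theorem aux4 (S : Type*) [CommRing S] : ∀ i j : Fin 4, auxPow S (2 + j - i) = auxPowJ S i * auxPowJ S j := by
  intro i j
  fin_cases i <;> fin_cases j <;> ext <;> simp only [re_mul, imI_mul, imJ_mul, imK_mul] <;> simp [auxPow, auxPowJ]

def auxHom (S : Type*) [CommRing S] : QuaternionGroup 2 →* ℍ[S] where
  toFun := auxFun S
  map_one' := by ext <;> rfl
  map_mul' := by
    rintro (i | i) (j | j)
    · exact aux1 S i j
    · exact aux2 S i j
    · exact aux3 S i j
    · exact aux4 S i j

theorem aux_idem {S : Type*} [CommRing S] [IsDomain S] (g : S →+* ℚ) (hg : Function.Injective g)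
    (e : ℍ[S]) (he : e * e = e) : e = 0 ∨ e = 1 := by
  have key : ∀ q : ℍ[S], normSq q = 0 → q = 0 := by
    intro q hq
    rw [normSq_def'] at hq
    have := congrArg g hq
    simp only [map_add, map_pow, map_zero] at this
    have h1 := sq_nonneg (g q.re)
    have h2 := sq_nonneg (g q.imI)
    have h3 := sq_nonneg (g q.imJ)
    have h4 := sq_nonneg (g q.imK)
    have hz : ∀ x : S, g x ^ 2 = 0 → x = 0 := fun x hx => by
      rw [sq_eq_zero_iff] at hx
      exact hg (by simpa using hx)
    ext
    · exact hz _ (by linarith)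
    · exact hz _ (by linarith)
    · exact hz _ (by linarith)
    · exact hz _ (by linarith)
  have : normSq e * normSq (e - 1) = 0 := by
    rw [← map_mul, mul_sub, he]; simp
  rcases mul_eq_zero.1 this with h | h
  · exact .inl (key _ h)
  · exact .inr (sub_eq_zero.1 (key _ h))

theorem aux_comp {S R : Type*} [CommRing S] [Ring R] [Algebra S R] (I J z : R) (h x y : S)
    (h2 : 2 * h = 1) (hI : I * I = z) (hJ : J * J = z) (hIJ : I * J = J * I * z)
    (hzI : z * I = I * z) (hzJ : z * J = J * z) (hz : z * z = 1)  :
    (h • (1 - z) * h • (1 + x • I + y • J)) * (h • (1 - z) * h • (1 + x • I + y • J)) -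
      h • (1 - z) * h • (1 + x • I + y • J) =
      (x ^ 2 + y ^ 2 + 1) • (-(h ^ 3) • (1 - z)) := by
  have hc : Commute (h • (1 - z)) (h • (1 + x • I + y • J)) := by
    apply Commute.smul_left
    apply Commute.smul_right
    have h1 : Commute z I := hzI
    have h2 : Commute z J := hzJ
    exact (Commute.one_left _).sub_left
      (((Commute.one_right _).add_right (h1.smul_right _)).add_right (h2.smul_right _))
  have e1 : (h • (1 - z)) * (h • (1 - z)) = h • (1 - z) := by
    have : (1 - z) * (1 - z) = (2 : S) • (1 - z) := by
      rw [two_smul]; simp only [mul_sub, sub_mul, hz]; noncomm_ring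
    rw [smul_mul_smul_comm, this, smul_smul]; congr 1; linear_combination h * h2
  have e2 : (1 - z) * ((1 + x • I + y • J) * (1 + x • I + y • J)) =
      (1 - z) * ((1 - x^2 - y^2) • 1 + (2 * x) • I + (2 * y) • J) := by
    have a1 : (1 - z) * z = - (1 - z) := by simp [sub_mul, hz]
    have a2 : (1 - z) * (I * J + J * I) = 0 := by
      rw [hIJ, mul_assoc, ← hzI, ← mul_assoc J, ← hzJ, mul_assoc z]
      have : z * (J * I) + J * I = (z + 1) * (J * I) := by noncomm_ring
      rw [this, ← mul_assoc]
      have : (1 - z) * (z + 1) = 0 := by simp [mul_add, sub_mul, hz]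
      rw [this, zero_mul]
    have : (1 + x • I + y • J) * (1 + x • I + y • J) =
        1 + (2 * x) • I + (2 * y) • J + (x^2 + y^2) • z + (x * y) • (I * J + J * I) := by
      simp only [mul_add, add_mul, smul_mul_smul_comm, hI, hJ, one_mul, mul_one]
      module
    rw [this]
    simp only [mul_add, mul_smul_comm, mul_one, a1] at a2 ⊢
    rw [a2]
    module
  have e3 : (h • (1 - z) * h • (1 + x • I + y • J)) * (h • (1 - z) * h • (1 + x • I + y • J)) =
      h • h • h • ((1 - z) * ((1 + x • I + y • J) * (1 + x • I + y • J))) := by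
    rw [← mul_assoc, mul_assoc _ _ (h • (1 - z)), ← hc.eq, ← mul_assoc, e1]
    simp only [smul_mul_assoc, mul_smul_comm, mul_assoc]
  rw [e3, e2]
  simp only [smul_mul_assoc, mul_smul_comm, mul_add, mul_one]
  have h3 : ∀ w : R, h • w = (2 * h ^ 2) • w := fun w => by
    congr 1; linear_combination - h * h2
  have h4 : ∀ w : R, h • h • w = (2 * h ^ 3) • w := fun w => by
    rw [h3 w, smul_smul]; congr 1; ring
  generalize (1 - z) * I = A
  generalize (1 - z) * J = B
  have h5 : h • (h • (1 - z) + x • h • A + y • h • B) = (2 * h ^ 3) • ((1 - z) + x • A + y • B) := by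
    rw [← h4]; module
  rw [h5]
  module

theorem aux_eps {S : Type*} [CommRing S] (h x y : S) (h2 : 2 * h = 1) :
    (h • (1 - auxFun S (.a 2)) * h • (1 + x • auxFun S (.a 1) + y • auxFun S (.xa 0))).re = h ∧
    (h • (1 - auxFun S (.a 2)) * h • (1 + x • auxFun S (.a 1) + y • auxFun S (.xa 0))).imI = h * x ∧
    (h • (1 - auxFun S (.a 2)) * h • (1 + x • auxFun S (.a 1) + y • auxFun S (.xa 0))).imJ = h * y ∧
    (h • (1 - auxFun S (.a 2)) * h • (1 + x • auxFun S (.a 1) + y • auxFun S (.xa 0))).imK = 0 := by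
  have e1 : auxFun S (.a 1) = ⟨0, 1, 0, 0⟩ := rfl
  have e2 : auxFun S (.a 2) = ⟨-1, 0, 0, 0⟩ := rfl
  have e3 : auxFun S (.xa 0) = ⟨0, 0, 1, 0⟩ := rfl
  simp only [re_mul, imI_mul, imJ_mul, imK_mul, re_smul, imI_smul, imJ_smul, imK_smul,
    re_add, imI_add, imJ_add, imK_add, re_sub, imI_sub, imJ_sub, imK_sub,
    re_one, imI_one, imJ_one, imK_one]
  rw [e1, e2, e3]
  simp only [smul_eq_mul]
  refine ⟨?_, ?_, ?_, ?_⟩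
  · linear_combination h * h2
  · linear_combination h * x * h2
  · linear_combination h * y * h2
  · ring

theorem aux_norm {S : Type*} [CommRing S] (h x y : S) (h2 : 2 * h = 1) (q : ℍ[S])
    (hq : q.re = h ∧ q.imI = h * x ∧ q.imJ = h * y ∧ q.imK = 0) :
    normSq (0 - q + 1) = h ^ 2 * (x ^ 2 + y ^ 2 + 1) ∧
    normSq (-(1 - q) + 1) = h ^ 2 * (x ^ 2 + y ^ 2 + 1) := by
  obtain ⟨a, b, c, d⟩ := hq
  constructor
  · rw [normSq_def']
    simp only [re_add, imI_add, imJ_add, imK_add, re_sub, imI_sub, imJ_sub, imK_sub,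
      re_one, imI_one, imJ_one, imK_one, re_zero, imI_zero, imJ_zero, imK_zero, a, b, c, d]
    linear_combination -h2
  · have : -(1 - q) + 1 = q := by abel
    rw [this, normSq_def', a, b, c, d]
    ring

theorem aux_inj (p : ℕ) [Fact p.Prime] : ∃ g : ZLoc p →+* ℚ, Function.Injective g := by
  have hM : (Ideal.span {(p : ℤ)}).primeCompl ≤ nonZeroDivisors ℤ :=
    Ideal.primeCompl_le_nonZeroDivisors _
  have hu : ∀ y : (Ideal.span {(p : ℤ)}).primeCompl, IsUnit (Int.castRingHom ℚ y) := by
    intro y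
    have := nonZeroDivisors.ne_zero (hM y.2)
    simpa using this
  refine ⟨IsLocalization.lift hu, ?_⟩
  rw [IsLocalization.lift_injective_iff]
  intro a b
  rw [(IsLocalization.injective (ZLoc p) hM).eq_iff]
  simp

/-- For every odd prime `p`, the group ring `ℤ_(p)Q₈` of the quaternion group of order `8`
is not semiperfect. -/
theorem not_isSemiperfectRing_zloc_quaternionGroup
    (p : ℕ) [Fact p.Prime] (hp : p ≠ 2) :
    ¬ IsSemiperfectRing (MonoidAlgebra (ZLoc p) (QuaternionGroup 2)) := by
  rintro ⟨-, H⟩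
  have hpp : p.Prime := Fact.out
  obtain ⟨g, hg⟩ := aux_inj p
  have hpm : (p : ZLoc p) ∈ IsLocalRing.maximalIdeal (ZLoc p) := by
    have := (IsLocalization.AtPrime.to_map_mem_maximal_iff (ZLoc p) (Ideal.span {(p : ℤ)}) (p : ℤ)).2
      (Ideal.subset_span rfl)
    simpa using this
  have h2u : IsUnit (2 : ZLoc p) := by
    have := (IsLocalization.AtPrime.isUnit_to_map_iff (ZLoc p) (Ideal.span {(p : ℤ)}) (2 : ℤ)).2
      (by
        intro h
        rw [SetLike.mem_coe, Ideal.mem_span_singleton] at h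
        have : p ∣ 2 := by exact_mod_cast h
        exact hp ((Nat.prime_dvd_prime_iff_eq hpp Nat.prime_two).1 this))
    simpa using this
  obtain ⟨h, h2⟩ := h2u.exists_right_inv
  obtain ⟨a, b, k, -, -, hk⟩ := Int.exists_sq_add_sq_add_one_eq_mul p
  have hk' : (a : ZLoc p) ^ 2 + (b : ZLoc p) ^ 2 + 1 = k * p := by exact_mod_cast congrArg (Nat.cast : ℕ → ZLoc p) hk
  have hxm : (a : ZLoc p) ^ 2 + (b : ZLoc p) ^ 2 + 1 ∈ IsLocalRing.maximalIdeal (ZLoc p) := by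
    rw [hk']; exact Ideal.mul_mem_left _ _ hpm
  generalize (a : ZLoc p) = x at *
  generalize (b : ZLoc p) = y at *
  let R := MonoidAlgebra (ZLoc p) (QuaternionGroup 2)
  let ι := MonoidAlgebra.of (ZLoc p) (QuaternionGroup 2)
  let I : R := ι (.a 1)
  let J : R := ι (.xa 0)
  let z : R := ι (.a 2)
  let ε : R := h • (1 - z) * h • (1 + x • I + y • J)
  have hε : ε * ε - ε ∈ ringJacobson R := by
    have := aux_comp I J z h x y h2 (by simp only [I, z, ← map_mul]; rfl)
      (by simp only [J, z, ← map_mul]; rfl) (by simp only [I, J, z, ← map_mul]; rfl)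
      (by simp only [I, z, ← map_mul]; rfl) (by simp only [J, z, ← map_mul]; rfl)
      (by rw [← map_one ι]; simp only [z, ← map_mul]; rfl)
    simp only [ε]
    rw [this]
    exact aux_jac _ hxm _
  obtain ⟨e, he, heq⟩ := H ((ringJacobson R).ringCon.mk' ε) (by
    unfold IsIdempotentElem
    rw [← map_mul]
    exact (RingCon.eq _).2 (((ringJacobson R).rel_iff _ _).2 hε))
  have hd : e - ε ∈ ringJacobson R := ((ringJacobson R).rel_iff _ _).1 ((RingCon.eq _).1 heq)
  let φ : R →ₐ[ZLoc p] ℍ[ZLoc p] := MonoidAlgebra.lift (ZLoc p) _ _ (auxHom (ZLoc p))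
  have φι : ∀ q, φ (ι q) = auxFun (ZLoc p) q := fun q => by
    exact MonoidAlgebra.lift_of (auxHom (ZLoc p)) q
  have φε := aux_eps h x y h2
  have φε' : φ ε = h • (1 - auxFun _ (.a 2)) * h • (1 + x • auxFun _ (.a 1) + y • auxFun _ (.xa 0)) := by
    simp only [ε, I, J, z, map_mul, map_smul, map_sub, map_add, map_one, φι]
  rw [← φε'] at φε
  have fin : ∀ w ∈ ringJacobson R, normSq (φ w + 1) ∈ IsLocalRing.maximalIdeal (ZLoc p) → False := by
    intro w hw hn
    obtain ⟨s, hs⟩ := TwoSidedIdeal.mem_jacobson_iff.1 hw 1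
    have hs' : s * (w + 1) = 1 := by
      have : s * 1 * w + s - 1 = 0 := hs
      rw [← sub_eq_zero, ← this]; noncomm_ring
    have := congrArg (fun t => normSq (φ t)) hs'
    simp only [map_mul, map_add, map_one] at this
    have h1 := Ideal.mul_mem_left _ (normSq (φ s)) hn
    rw [this] at h1
    exact (Ideal.ne_top_iff_one _).1 (IsLocalRing.maximalIdeal.isMaximal _).ne_top h1
  have hN : h ^ 2 * (x ^ 2 + y ^ 2 + 1) ∈ IsLocalRing.maximalIdeal (ZLoc p) :=
    Ideal.mul_mem_left _ _ hxm
  rcases aux_idem g hg (φ e) (by rw [← map_mul, he.eq]) with h0 | h0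
  · apply fin _ hd
    rw [map_sub, h0, (aux_norm h x y h2 _ φε).1]
    exact hN
  · apply fin _ (neg_mem hd)
    rw [map_neg, map_sub, h0, (aux_norm h x y h2 _ φε).2]
    exact hN
end
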